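/- arXiv:1504.00354 — 3 statements merged into one kernel-verified Lean document; each statement's English description precedes it below -/
import Mathlib

section
/- Let E be a homogeneous effect algebra and let B ⊆ E. The following are equivalent: (a) B is a maximal internally compatible subset of E with 1 ∈ B; (b) B is a block of E, i.e. a maximal sub-effect algebra of E satisfying the Riesz decomposition property. -/
/-- An effect algebra: a partial commutative, associative operation `oplus`
(with definedness encoded via `Option`), constants `zero` and `one`,
unique orthosupplements, and `a ⊕ 1` defined only for `a = 0`. -/
structure EffectAlgebra (E : Type*) where
  oplus : E → E → Option E
  zero : E
  one : E
  comm : ∀ a b, oplus a b = oplus b a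
  assoc : ∀ a b c ab abc, oplus a b = some ab → oplus ab c = some abc →
    ∃ bc, oplus b c = some bc ∧ oplus a bc = some abc
  compl_exists : ∀ a, ∃ b, oplus a b = some one
  compl_unique : ∀ a b c, oplus a b = some one → oplus a c = some one → b = c
  add_one : ∀ a b, oplus a one = some b → a = zero

namespace EffectAlgebra

variable {E : Type*} (A : EffectAlgebra E)

/-- `a ⊥ b` : the sum `a ⊕ b` is defined. -/
def Perp (a b : E) : Prop := (A.oplus a b).isSome

/-- `a ≤ b` iff `b = a ⊕ c` for some `c`. -/
def le (a b : E) : Prop := ∃ c, A.oplus a c = some b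

/-- The orthosupplement `a'`: the unique `b` with `a ⊕ b = 1`. -/
noncomputable def compl (a : E) : E :=
  @Classical.epsilon E ⟨A.zero⟩ fun b => A.oplus a b = some A.one

/-- `a ⊖ b` : the unique `c` with `b ⊕ c = a` (defined when `b ≤ a`). -/
noncomputable def ominus (a b : E) : E :=
  @Classical.epsilon E ⟨A.zero⟩ fun c => A.oplus b c = some a

/-- Homogeneity. -/
def Homogeneous : Prop :=
  ∀ u v₁ v₂ s, A.oplus v₁ v₂ = some s → A.le u s → A.le u (A.compl s) →
    ∃ u₁ u₂, A.le u₁ v₁ ∧ A.le u₂ v₂ ∧ A.oplus u₁ u₂ = some u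

/-- Riesz decomposition property. -/
def RDP : Prop :=
  ∀ u v₁ v₂ s, A.oplus v₁ v₂ = some s → A.le u s →
    ∃ u₁ u₂, A.le u₁ v₁ ∧ A.le u₂ v₂ ∧ A.oplus u₁ u₂ = some u

/-- The sum `c₁ ⊕ … ⊕ cₙ` of a finite family (a list); `some s` iff the family
is orthogonal with sum `s`. -/
def sumList : List E → Option E
  | [] => some A.zero
  | x :: xs => (sumList xs).bind fun s => A.oplus x s

/-- The subfamily of `C` indexed by a set of indices `S ⊆ {1,…,n}`. -/
def pickList (C : List E) (S : Finset (Fin C.length)) : List E :=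
  (S.sort (· ≤ ·)).map C.get

/-- `C` is an orthogonal cover of `M`. -/
def IsCoverOf (C : List E) (M : Set E) : Prop :=
  (A.sumList C).isSome ∧
    ∀ a ∈ M, ∃ S : Finset (Fin C.length), A.sumList (pickList C S) = some a

/-- `M` is compatible with covers in `X`: every finite subset of `M` has an
orthogonal cover with range contained in `X`. -/
def CompatWithCoversIn (M X : Set E) : Prop :=
  ∀ F : Finset E, ↑F ⊆ M →
    ∃ C : List E, (∀ c ∈ C, c ∈ X) ∧ A.IsCoverOf C ↑F

/-- `M` is compatible (with covers in `E`). -/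
def Compatible (M : Set E) : Prop := A.CompatWithCoversIn M Set.univ

/-- `M` is internally compatible. -/
def InternallyCompatible (M : Set E) : Prop := A.CompatWithCoversIn M M

/-- `D` is a refinement of `C`: a partition `{P i}` of the index set of `D`
with `C i = ⊕_{j ∈ P i} D j`. -/
def IsRefinement (D C : List E) : Prop :=
  ∃ P : Fin C.length → Finset (Fin D.length),
    (∀ i j, i ≠ j → Disjoint (P i) (P j)) ∧
    (∀ k, ∃ i, k ∈ P i) ∧
    (∀ i, A.sumList (pickList D (P i)) = some (C.get i))

/-- One step of the closure construction `M ↦ M₁`. -/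
def closureStep (M : Set E) : Set E :=
  {x | ∃ y ∈ M, A.le x y ∧ A.le x (A.compl y)} ∪
  {z | ∃ y ∈ M, ∃ x, A.le x y ∧ A.le x (A.compl y) ∧ A.oplus x z = some y}

/-- The sets `Mₙ`. -/
def closureSeq (M : Set E) (n : ℕ) : Set E := (A.closureStep)^[n] M

/-- The closure `M̄ = ⋃ₙ Mₙ`. -/
def closure (M : Set E) : Set E := ⋃ n, A.closureSeq M n

/-- `B` is a sub-effect algebra of `E`. -/
def IsSubEA (B : Set E) : Prop :=
  A.one ∈ B ∧ ∀ a ∈ B, ∀ b ∈ B, A.le b a → A.ominus a b ∈ B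

/-- The Riesz decomposition property for (the effect algebra on) a subset `B`. -/
def RDPOn (B : Set E) : Prop :=
  ∀ u v₁ v₂ s, u ∈ B → v₁ ∈ B → v₂ ∈ B → A.oplus v₁ v₂ = some s → A.le u s →
    ∃ u₁ u₂, u₁ ∈ B ∧ u₂ ∈ B ∧ A.le u₁ v₁ ∧ A.le u₂ v₂ ∧ A.oplus u₁ u₂ = some u

/-- Homogeneity for (the effect algebra on) a subset `B`. -/
def HomogeneousOn (B : Set E) : Prop :=
  ∀ u v₁ v₂ s, u ∈ B → v₁ ∈ B → v₂ ∈ B → A.oplus v₁ v₂ = some s →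
    A.le u s → A.le u (A.compl s) →
    ∃ u₁ u₂, u₁ ∈ B ∧ u₂ ∈ B ∧ A.le u₁ v₁ ∧ A.le u₂ v₂ ∧ A.oplus u₁ u₂ = some u

/-- A block: a maximal sub-effect algebra satisfying the Riesz decomposition
property. -/
def IsBlock (B : Set E) : Prop :=
  A.IsSubEA B ∧ A.RDPOn B ∧
    ∀ B', A.IsSubEA B' → A.RDPOn B' → B ⊆ B' → B' = B

/-- A block of the sub-effect algebra on `F`: a maximal sub-effect algebra of
`F` satisfying the Riesz decomposition property. -/
def IsBlockIn (F B : Set E) : Prop :=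
  B ⊆ F ∧ A.IsSubEA B ∧ A.RDPOn B ∧
    ∀ B', B' ⊆ F → A.IsSubEA B' → A.RDPOn B' → B ⊆ B' → B' = B

/-- `a` is sharp: the infimum `a ∧ a'` exists and equals `0`, i.e. every common
lower bound of `a` and `a'` is `0`. -/
def Sharp (a : E) : Prop :=
  ∀ b, A.le b a → A.le b (A.compl a) → b = A.zero

/-- `a` is sharp in the sub-effect algebra on `F`. -/
def SharpIn (F : Set E) (a : E) : Prop :=
  a ∈ F ∧ ∀ b ∈ F, A.le b a → A.le b (A.compl a) → b = A.zero

/-- `a` is principal. -/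
def Principal (a : E) : Prop :=
  ∀ x y s, A.le x a → A.le y a → A.oplus x y = some s → A.le s a

/-- `a` is principal in the sub-effect algebra on `B`. -/
def PrincipalIn (B : Set E) (a : E) : Prop :=
  a ∈ B ∧ ∀ x ∈ B, ∀ y ∈ B, ∀ s, A.le x a → A.le y a →
    A.oplus x y = some s → A.le s a

/-- `a` is central: principal, and every `b` has a unique decomposition
`b = b₁ ⊕ b₂` with `b₁ ≤ a`, `b₂ ≤ a'`. -/
def Central (a : E) : Prop :=
  A.Principal a ∧ ∀ b, ∃! p : E × E,
    A.le p.1 a ∧ A.le p.2 (A.compl a) ∧ A.oplus p.1 p.2 = some b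

/-- `a` is central in the sub-effect algebra on `B`. -/
def CentralIn (B : Set E) (a : E) : Prop :=
  A.PrincipalIn B a ∧ ∀ b ∈ B, ∃! p : E × E,
    p.1 ∈ B ∧ p.2 ∈ B ∧ A.le p.1 a ∧ A.le p.2 (A.compl a) ∧
      A.oplus p.1 p.2 = some b

/-- The center `C(E)`. -/
def center : Set E := {a | A.Central a}

/-- The compatibility center `K(E)`: the intersection of all blocks. -/
def compatCenter : Set E := {x | ∀ B, A.IsBlock B → x ∈ B}

end EffectAlgebra

namespace EffectAlgebra

/-- `E` with an absorbing element added: a total commutative monoid. -/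
def Ext {E : Type*} (_A : EffectAlgebra E) := Option E

section Basic

variable {E : Type*} (A : EffectAlgebra E)

/-- The embedding. -/
def emb (a : E) : Ext A := some a

theorem emb_inj {a b : E} (h : A.emb a = A.emb b) : a = b := Option.some.inj h

theorem one_zero : A.oplus A.one A.zero = some A.one := by
  obtain ⟨b, hb⟩ := A.compl_exists A.one
  have h2 : A.oplus b A.one = some A.one := by rw [A.comm]; exact hb
  rwa [A.add_one b _ h2] at hb

theorem oplus_zero (a : E) : A.oplus a A.zero = some a := by
  obtain ⟨b, hb⟩ := A.compl_exists a
  have hb' : A.oplus b a = some A.one := by rw [A.comm]; exact hb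
  obtain ⟨c, hc, hbc⟩ := A.assoc b a A.zero _ _ hb' A.one_zero
  rw [hc, A.compl_unique b c a hbc hb']

/-- Total addition. -/
def extAdd (x y : Option E) : Option E := x.bind fun a => y.bind fun b => A.oplus a b

theorem extAdd_some (a b : E) : A.extAdd (some a) (some b) = A.oplus a b := rfl

theorem none_extAdd (x : Option E) : A.extAdd none x = none := rfl

theorem extAdd_none (x : Option E) : A.extAdd x none = none := by
  cases x <;> rfl

theorem extAdd_comm (x y : Option E) : A.extAdd x y = A.extAdd y x := by
  rcases x with _ | a
  · rw [extAdd_none, none_extAdd]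
  rcases y with _ | b
  · rw [extAdd_none, none_extAdd]
  exact A.comm a b

theorem extAdd_assoc_some (x y z : Option E) (t : E)
    (h : A.extAdd (A.extAdd x y) z = some t) :
    A.extAdd x (A.extAdd y z) = some t := by
  rcases x with _ | a
  · rw [none_extAdd, none_extAdd] at h
    cases h
  rcases y with _ | b
  · rw [extAdd_none, none_extAdd] at h
    cases h
  rcases z with _ | c
  · rw [extAdd_none] at h
    cases h
  rw [extAdd_some] at h
  rcases hab : A.oplus a b with _ | ab
  · rw [hab, none_extAdd] at h
    cases h
  · rw [hab, extAdd_some] at h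
    obtain ⟨bc, h1, h2⟩ := A.assoc a b c ab t hab h
    rw [extAdd_some, h1, extAdd_some, h2]

theorem extAdd_assoc (x y z : Option E) :
    A.extAdd (A.extAdd x y) z = A.extAdd x (A.extAdd y z) := by
  rcases h : A.extAdd (A.extAdd x y) z with _ | t
  · rcases h2 : A.extAdd x (A.extAdd y z) with _ | t
    · rfl
    · have h3 : A.extAdd (A.extAdd z y) x = some t := by
        rw [A.extAdd_comm, A.extAdd_comm z y]; exact h2
      have h4 := A.extAdd_assoc_some z y x t h3
      rw [A.extAdd_comm, A.extAdd_comm y x, h] at h4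
      cases h4
  · exact (A.extAdd_assoc_some x y z t h).symm

theorem extAdd_zero (x : Option E) : A.extAdd x (some A.zero) = x := by
  rcases x with _ | a
  · rfl
  · exact A.oplus_zero a

theorem zero_extAdd (x : Option E) : A.extAdd (some A.zero) x = x := by
  rw [A.extAdd_comm]; exact A.extAdd_zero x

theorem extAdd_left_fin (x y : Option E) (c : E) (h : A.extAdd x y = some c) :
    ∃ a, x = some a := by
  rcases x with _ | a
  · rw [none_extAdd] at h
    cases h
  · exact ⟨a, rfl⟩

instance instAddExt : Add (Ext A) := ⟨A.extAdd⟩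

instance instZeroExt : Zero (Ext A) := ⟨(some A.zero : Option E)⟩

instance instExt : AddCommMonoid (Ext A) where
  add_assoc := A.extAdd_assoc
  add_comm := A.extAdd_comm
  zero_add := A.zero_extAdd
  add_zero := A.extAdd_zero
  nsmul := nsmulRec

theorem emb_zero : A.emb A.zero = 0 := rfl

theorem emb_add (a b c : E) : A.emb a + A.emb b = A.emb c ↔ A.oplus a b = some c := Iff.rfl

theorem left_fin {x y : Ext A} {c : E} (h : x + y = A.emb c) : ∃ a, x = A.emb a := by
  exact A.extAdd_left_fin x y c h

theorem right_fin {x y : Ext A} {c : E} (h : x + y = A.emb c) : ∃ a, y = A.emb a :=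
  A.left_fin (x := y) (y := x) (by rw [add_comm]; exact h)

theorem exists_compl (a : E) : ∃ b, A.emb a + A.emb b = A.emb A.one := A.compl_exists a

theorem ext_cancel {x y z : Ext A} {d : E} (h1 : x + y = A.emb d) (h2 : x + z = A.emb d) :
    y = z := by
  obtain ⟨d', hd⟩ := A.exists_compl d
  obtain ⟨b, rfl⟩ := A.right_fin h1
  obtain ⟨c, rfl⟩ := A.right_fin h2
  have e1 : (x + A.emb d') + A.emb b = A.emb A.one := by
    rw [← hd, ← h1]; abel
  have e2 : (x + A.emb d') + A.emb c = A.emb A.one := by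
    rw [← hd, ← h2]; abel
  obtain ⟨w, hw⟩ := A.left_fin e1
  rw [hw] at e1 e2
  rw [A.compl_unique w b c e1 e2]

theorem add_eq_zero_left {a b : E} (h : A.emb a + A.emb b = 0) : a = A.zero := by
  have h1 : A.emb b + (A.emb a + A.emb A.one) = A.emb A.one := by
    calc _ = (A.emb a + A.emb b) + A.emb A.one := by abel
      _ = _ := by rw [h, zero_add]
  obtain ⟨c, hc⟩ := A.right_fin h1
  exact A.add_one a c hc

theorem le_iff (a b : E) : A.le a b ↔ ∃ c, A.emb a + A.emb c = A.emb b := Iff.rfl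

theorem le_of_add {a : E} {x : Ext A} {b : E} (h : A.emb a + x = A.emb b) : A.le a b := by
  obtain ⟨c, rfl⟩ := A.right_fin h
  exact ⟨c, h⟩

theorem compl_spec (a : E) : A.emb a + A.emb (A.compl a) = A.emb A.one :=
  @Classical.epsilon_spec E (fun b => A.oplus a b = some A.one) (A.compl_exists a)

theorem ominus_spec {a b : E} (h : A.le b a) : A.emb b + A.emb (A.ominus a b) = A.emb a :=
  @Classical.epsilon_spec E (fun c => A.oplus b c = some a) h

theorem le_compl_of_perp {u s t : E} (h : A.emb u + A.emb s = A.emb t) :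
    A.le u (A.compl s) := by
  obtain ⟨t', ht⟩ := A.exists_compl t
  apply A.le_of_add (x := A.emb t')
  refine A.ext_cancel (x := A.emb s) (d := A.one) ?_ (A.compl_spec s)
  rw [← ht, ← h]; abel

/-- Sum of a multiset. -/
def S (m : Multiset E) : Ext A := (m.map A.emb).sum

@[simp] theorem S_zero : A.S 0 = 0 := by simp [S]

@[simp] theorem S_cons (a : E) (m : Multiset E) : A.S (a ::ₘ m) = A.emb a + A.S m := by simp [S]

@[simp] theorem S_add (m n : Multiset E) : A.S (m + n) = A.S m + A.S n := by simp [S]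

theorem S_le {m n : Multiset E} (h : m ≤ n) {s : E} (hs : A.S n = A.emb s) :
    ∃ t, A.S m = A.emb t := by
  obtain ⟨k, rfl⟩ := Multiset.le_iff_exists_add.1 h
  rw [S_add] at hs
  exact A.left_fin hs

/-- Refinement of multisets. -/
inductive Ref : Multiset E → Multiset E → Prop
  | zero : Ref 0 0
  | keep (a : E) (C D : Multiset E) : Ref C D → Ref (a ::ₘ C) (a ::ₘ D)
  | split (a p q : E) (C D : Multiset E) : A.emb p + A.emb q = A.emb a → Ref C D →
      Ref (a ::ₘ C) (p ::ₘ q ::ₘ D)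

variable {A}

theorem Ref.refl (C : Multiset E) : A.Ref C C := by
  induction C using Multiset.induction_on with
  | empty => exact .zero
  | cons a C ih => exact .keep _ _ _ ih

theorem Ref.add {C D C' D' : Multiset E} (h : A.Ref C D) (h' : A.Ref C' D') :
    A.Ref (C + C') (D + D') := by
  induction h with
  | zero => simpa using h'
  | keep a C D _ ih => simpa [Multiset.cons_add] using Ref.keep a _ _ ih
  | split a p q C D hpq _ ih => simpa [Multiset.cons_add] using Ref.split a p q _ _ hpq ih

theorem Ref.sum {C D : Multiset E} (h : A.Ref C D) : A.S D = A.S C := by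
  induction h with
  | zero => rfl
  | keep a C D _ ih => simp [ih]
  | split a p q C D hpq _ ih => simp [ih, ← hpq, add_assoc]

theorem Ref.le_split {C D : Multiset E} (h : A.Ref C D) :
    ∀ T K, C = T + K → ∃ T' K', D = T' + K' ∧ A.Ref T T' ∧ A.Ref K K' := by
  induction h with
  | zero =>
    intro T K h
    have h1 : T = 0 ∧ K = 0 := by simpa using h.symm
    obtain ⟨rfl, rfl⟩ := h1
    exact ⟨0, 0, by simp, .zero, .zero⟩
  | keep a C D _ ih =>
    intro T K h
    have ha : a ∈ T + K := by rw [← h]; simp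
    rcases Multiset.mem_add.1 ha with ha | ha
    · obtain ⟨T1, rfl⟩ := Multiset.exists_cons_of_mem ha
      obtain ⟨T', K', h1, h2, h3⟩ := ih T1 K (by simpa [Multiset.cons_add] using h)
      exact ⟨a ::ₘ T', K', by simp [h1], .keep _ _ _ h2, h3⟩
    · obtain ⟨K1, rfl⟩ := Multiset.exists_cons_of_mem ha
      obtain ⟨T', K', h1, h2, h3⟩ := ih T K1 (by simpa [Multiset.add_cons] using h)
      exact ⟨T', a ::ₘ K', by simp [h1], h2, .keep _ _ _ h3⟩
  | split a p q C D hpq _ ih =>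
    intro T K h
    have ha : a ∈ T + K := by rw [← h]; simp
    rcases Multiset.mem_add.1 ha with ha | ha
    · obtain ⟨T1, rfl⟩ := Multiset.exists_cons_of_mem ha
      obtain ⟨T', K', h1, h2, h3⟩ := ih T1 K (by simpa [Multiset.cons_add] using h)
      exact ⟨p ::ₘ q ::ₘ T', K', by simp [h1], .split _ _ _ _ _ hpq h2, h3⟩
    · obtain ⟨K1, rfl⟩ := Multiset.exists_cons_of_mem ha
      obtain ⟨T', K', h1, h2, h3⟩ := ih T K1 (by simpa [Multiset.add_cons] using h)
      exact ⟨T', p ::ₘ q ::ₘ K', by simp [h1], h2, .split _ _ _ _ _ hpq h3⟩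

variable (A)

/-- `a` is a subsum of `C`. -/
def Sub (C : Multiset E) (a : E) : Prop := ∃ T ≤ C, A.S T = A.emb a

variable {A}

theorem Ref.sub {C D : Multiset E} (h : A.Ref C D) {a : E} (ha : A.Sub C a) : A.Sub D a := by
  obtain ⟨T, hT, hs⟩ := ha
  obtain ⟨K, rfl⟩ := Multiset.le_iff_exists_add.1 hT
  obtain ⟨T', K', rfl, h2, -⟩ := h.le_split T K rfl
  exact ⟨T', Multiset.le_add_right _ _, by rw [h2.sum, hs]⟩

variable (A)

/-- Closedness. -/
def Closed (B : Set E) : Prop :=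
  ∀ y ∈ B, ∀ x z t, A.emb x + A.emb z = A.emb y → A.emb x + A.emb y = A.emb t → x ∈ B ∧ z ∈ B

theorem split_hom (hH : A.Homogeneous) {B : Set E} (hB : A.Closed B) (R : Multiset E) :
    ∀ u s t, (∀ r ∈ R, r ∈ B) → A.S R = A.emb s → A.le u s → A.emb u + A.emb s = A.emb t →
      ∃ R', A.Ref R R' ∧ (∀ r ∈ R', r ∈ B) ∧ A.Sub R' u := by
  induction R using Multiset.induction_on with
  | empty =>
    intro u s t _ hs hu _
    obtain ⟨c, hc⟩ := hu
    rw [← emb_add, ← hs, S_zero] at hc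
    have := A.add_eq_zero_left hc
    subst this
    exact ⟨0, .zero, by simp, 0, le_rfl, by simp [emb_zero]⟩
  | cons v R ih =>
    intro u s t hR hs hu ht
    rw [S_cons] at hs
    obtain ⟨s2, hs2⟩ := A.right_fin hs
    rw [hs2] at hs
    obtain ⟨u1, u2, ⟨z, hz⟩, h2, h12⟩ := hH u v s2 s hs hu (A.le_compl_of_perp ht)
    rw [← emb_add] at hz h12
    rw [← h12, ← hs] at ht
    have e1 : (A.emb u2 + A.emb s2) + (A.emb u1 + A.emb v) = A.emb t := by rw [← ht]; abel
    obtain ⟨t1, ht1⟩ := A.left_fin e1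
    obtain ⟨t2, ht2⟩ := A.right_fin e1
    obtain ⟨R', hr, hRB, T, hT, hTs⟩ :=
      ih u2 s2 t1 (fun r hr => hR r (Multiset.mem_cons_of_mem hr)) hs2 h2 ht1
    obtain ⟨hu1, hz1⟩ := hB v (hR v (Multiset.mem_cons_self _ _)) u1 z t2 hz ht2
    refine ⟨u1 ::ₘ z ::ₘ R', .split _ _ _ _ _ hz hr, ?_, u1 ::ₘ T, ?_, ?_⟩
    · intro r hr'
      simp only [Multiset.mem_cons] at hr'
      rcases hr' with rfl | rfl | h
      · exact hu1
      · exact hz1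
      · exact hRB r h
    · exact Multiset.cons_le_cons _ (hT.trans (Multiset.le_cons_self _ _))
    · rw [S_cons, hTs, h12]

/-- Key lemma: subsums `u ≤ x` of a cover. -/
theorem key (hH : A.Homogeneous) {B : Set E} (hB : A.Closed B) {C X : Multiset E}
    (hCB : ∀ c ∈ C, c ∈ B) {s : E} (hs : A.S C = A.emb s) (hX : X ≤ C) {x u : E}
    (hx : A.S X = A.emb x) (hu : A.Sub C u) (hle : A.le u x) :
    ∃ X', A.Ref X X' ∧ (∀ r ∈ X', r ∈ B) ∧ A.Sub X' u := by
  classical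
  obtain ⟨U, hU, hus⟩ := hu
  have eX : X = X ∩ U + (X - U) := by
    ext a; simp [Multiset.count_inter, Multiset.count_sub]; omega
  have eU : U = X ∩ U + (U - X) := by
    ext a; simp [Multiset.count_inter, Multiset.count_sub]; omega
  have hle2 : (U - X) + (X - U) ≤ C := by
    rw [Multiset.le_iff_count] at hU hX ⊢
    intro a
    have := hU a
    have := hX a
    simp [Multiset.count_sub]; omega
  obtain ⟨t, ht⟩ := A.S_le hle2 hs
  rw [S_add] at ht
  obtain ⟨q, hq⟩ := A.left_fin ht
  obtain ⟨r, hr⟩ := A.right_fin ht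
  obtain ⟨c, hc⟩ := hle
  rw [← emb_add, ← hus, ← hx] at hc
  have hqr : A.le q r := by
    apply A.le_of_add (x := A.emb c)
    rw [eU, S_add, hq] at hc
    rw [← hr]
    refine A.ext_cancel (x := A.S (X ∩ U)) (d := x) ?_ ?_
    · rw [← add_assoc, hc, hx]
    · rw [← S_add, ← eX, hx]
  rw [hq, hr] at ht
  obtain ⟨R', h1, h2, T, hT, hTs⟩ := A.split_hom hH hB (X - U) q r t
    (fun a ha => hCB a (Multiset.mem_of_le (Multiset.sub_le_self _ _ |>.trans hX) ha)) hr hqr ht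
  refine ⟨X ∩ U + R', ?_, ?_, X ∩ U + T, ?_, ?_⟩
  · have := (Ref.refl (A := A) (X ∩ U)).add h1
    rwa [← eX] at this
  · intro a ha
    rcases Multiset.mem_add.1 ha with ha | ha
    · exact hCB a (Multiset.mem_of_le hX (Multiset.mem_inter.1 ha).1)
    · exact h2 a ha
  · gcongr
  · rw [S_add, hTs, ← hq, ← S_add, ← eU, hus]

/-- Internal compatibility through multisets. -/
def IC (M : Set E) : Prop :=
  ∀ F : Finset E, ↑F ⊆ M → ∃ C : Multiset E, (∀ c ∈ C, c ∈ M) ∧ (∃ s, A.S C = A.emb s) ∧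
    ∀ a ∈ F, A.Sub C a

theorem sumList_eq (l : List E) : A.sumList l = A.S (l : Multiset E) := by
  induction l with
  | nil => rfl
  | cons a l ih =>
    rw [← Multiset.cons_coe, S_cons, ← ih, sumList]
    rcases A.sumList l with _ | b
    · rfl
    · rfl

theorem pickList_coe (C : List E) (s : Finset (Fin C.length)) :
    (pickList C s : Multiset E) = s.val.map C.get := by
  rw [pickList, ← Multiset.map_coe, Finset.sort_eq]

theorem sub_iff (C : List E) (a : E) :
    A.Sub (C : Multiset E) a ↔
      ∃ s : Finset (Fin C.length), A.sumList (pickList C s) = some a := by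
  constructor
  · rintro ⟨T, hT, hs⟩
    induction T using Quotient.inductionOn with
    | h l =>
      obtain ⟨l', hp, hsub⟩ := Multiset.coe_le.1 hT
      obtain ⟨f, hf⟩ := List.sublist_iff_exists_fin_orderEmbedding_get_eq.1 hsub
      refine ⟨Finset.univ.map f.toEmbedding, ?_⟩
      rw [sumList_eq, pickList_coe]
      have : (Finset.univ.map f.toEmbedding).val.map C.get = (l : Multiset E) := by
        rw [← Multiset.coe_eq_coe.2 hp, Finset.map_val, Multiset.map_map]
        have h2 : (C.get ∘ f.toEmbedding) = l'.get := by
          funext i; exact (hf i).symm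
        rw [h2, Fin.univ_val_map, List.ofFn_get]
      rw [this]
      exact hs
  · rintro ⟨s, hs⟩
    refine ⟨_, ?_, (A.sumList_eq _).symm.trans hs⟩
    rw [pickList_coe]
    have : (C : Multiset E) = (Finset.univ : Finset (Fin C.length)).val.map C.get := by
      rw [Fin.univ_val_map, List.ofFn_get]
    conv_rhs => rw [this]
    exact Multiset.map_le_map (Finset.val_le_iff.2 (Finset.subset_univ s))

theorem ic_iff (M : Set E) : A.InternallyCompatible M ↔ A.IC M := by
  refine forall_congr' fun F => forall_congr' fun _ => ?_
  constructor
  · rintro ⟨C, h1, h2, h3⟩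
    refine ⟨C, by simpa using h1, ?_, fun a ha => (A.sub_iff C a).2 (h3 a ha)⟩
    obtain ⟨s, hs⟩ := Option.isSome_iff_exists.1 h2
    exact ⟨s, (A.sumList_eq _).symm.trans hs⟩
  · rintro ⟨C, h1, ⟨s, h2⟩, h3⟩
    induction C using Quotient.inductionOn with
    | h l =>
      refine ⟨l, fun c hc => h1 c (by simpa using hc), ?_, fun a ha => (A.sub_iff l a).1 (h3 a ha)⟩
      exact Option.isSome_iff_exists.2 ⟨s, (A.sumList_eq l).trans h2⟩

/-- The closure of a set. -/
inductive Cl (M : Set E) : E → Prop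
  | base (a : E) : a ∈ M → Cl M a
  | left (y x z t : E) : Cl M y → A.emb x + A.emb z = A.emb y → A.emb x + A.emb y = A.emb t →
      Cl M x
  | right (y x z t : E) : Cl M y → A.emb x + A.emb z = A.emb y → A.emb x + A.emb y = A.emb t →
      Cl M z

theorem closed_cl (M : Set E) : A.Closed {a | A.Cl M a} :=
  fun y hy x z t h1 h2 => ⟨.left y x z t hy h1 h2, .right y x z t hy h1 h2⟩

variable {A}

theorem Ref.fin {C D : Multiset E} (h : A.Ref C D) (hC : ∃ s, A.S C = A.emb s) :
    ∃ s, A.S D = A.emb s := by rwa [h.sum]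

theorem Ref.of_le {C X X' : Multiset E} (hX : X ≤ C) (h : A.Ref X X') {B : Set E}
    (hC : ∀ c ∈ C, c ∈ B) (hX' : ∀ c ∈ X', c ∈ B) :
    ∃ K, C = X + K ∧ A.Ref C (X' + K) ∧ ∀ c ∈ X' + K, c ∈ B := by
  obtain ⟨K, rfl⟩ := Multiset.le_iff_exists_add.1 hX
  refine ⟨K, rfl, h.add (Ref.refl K), ?_⟩
  intro c hc
  rcases Multiset.mem_add.1 hc with hc | hc
  · exact hX' c hc
  · exact hC c (Multiset.mem_add.2 (Or.inr hc))

theorem Sub.mono {C D : Multiset E} (h : C ≤ D) {a : E} (ha : A.Sub C a) : A.Sub D a := by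
  obtain ⟨T, hT, hs⟩ := ha
  exact ⟨T, hT.trans h, hs⟩

theorem Sub.diff {X : Multiset E} {x y z : E} (hX : A.S X = A.emb y)
    (hx : A.Sub X x) (h : A.emb x + A.emb z = A.emb y) : A.Sub X z := by
  obtain ⟨T, hT, hs⟩ := hx
  obtain ⟨K, rfl⟩ := Multiset.le_iff_exists_add.1 hT
  rw [S_add, hs] at hX
  exact ⟨K, Multiset.le_add_left _ _, A.ext_cancel hX h⟩

variable (A)

theorem closed_step (hH : A.Homogeneous) {B : Set E} (hB : A.Closed B) {C : Multiset E}
    (hCB : ∀ c ∈ C, c ∈ B) (hC : ∃ s, A.S C = A.emb s) {x y z t : E} (hy : A.Sub C y)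
    (h1 : A.emb x + A.emb z = A.emb y) (h2 : A.emb x + A.emb y = A.emb t) :
    ∃ D, A.Ref C D ∧ (∀ c ∈ D, c ∈ B) ∧ A.Sub D x ∧ A.Sub D z := by
  obtain ⟨Y, hY, hs⟩ := hy
  obtain ⟨Y', r, hYB, hx⟩ := A.split_hom hH hB Y x y t
    (fun c hc => hCB c (Multiset.mem_of_le hY hc)) hs ⟨z, h1⟩ h2
  obtain ⟨K, -, hr, hb⟩ := r.of_le hY hCB hYB
  have hz := hx.diff (r.sum.trans hs) h1
  exact ⟨_, hr, hb, hx.mono (Multiset.le_add_right _ _), hz.mono (Multiset.le_add_right _ _)⟩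

/-- transitive refinements: all that is needed is that subsums persist -/
theorem cl_cover (hH : A.Homogeneous) (M : Set E) (z : E) (hz : A.Cl M z) :
    ∃ G : Finset E, ↑G ⊆ M ∧ ∀ C : Multiset E, (∀ c ∈ C, A.Cl M c) → (∃ s, A.S C = A.emb s) →
      (∀ a ∈ G, A.Sub C a) → ∃ D, (∀ c ∈ D, A.Cl M c) ∧ (∃ s, A.S D = A.emb s) ∧
        (∀ a, A.Sub C a → A.Sub D a) ∧ A.Sub D z := by
  induction hz with
  | base a ha =>
    exact ⟨{a}, by simpa using ha, fun C h1 h2 h3 => ⟨C, h1, h2, fun _ h => h, h3 a (by simp)⟩⟩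
  | left y x z t _ h1 h2 ih =>
    obtain ⟨G, hG, H⟩ := ih
    refine ⟨G, hG, fun C c1 c2 c3 => ?_⟩
    obtain ⟨D, d1, d2, d3, d4⟩ := H C c1 c2 c3
    obtain ⟨D', r, e1, e2, e3⟩ := A.closed_step hH (A.closed_cl M) d1 d2 d4 h1 h2
    exact ⟨D', e1, r.fin d2, fun a ha => r.sub (d3 a ha), e2⟩
  | right y x z t _ h1 h2 ih =>
    obtain ⟨G, hG, H⟩ := ih
    refine ⟨G, hG, fun C c1 c2 c3 => ?_⟩
    obtain ⟨D, d1, d2, d3, d4⟩ := H C c1 c2 c3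
    obtain ⟨D', r, e1, e2, e3⟩ := A.closed_step hH (A.closed_cl M) d1 d2 d4 h1 h2
    exact ⟨D', e1, r.fin d2, fun a ha => r.sub (d3 a ha), e3⟩

theorem cl_ic (hH : A.Homogeneous) (M : Set E) (hM : A.IC M) : A.IC {a | A.Cl M a} := by
  classical
  have main : ∀ F : Finset E, (∀ a ∈ F, A.Cl M a) → ∀ G0 : Finset E, ↑G0 ⊆ M →
      ∃ C : Multiset E, (∀ c ∈ C, A.Cl M c) ∧ (∃ s, A.S C = A.emb s) ∧
        (∀ a ∈ G0, A.Sub C a) ∧ ∀ a ∈ F, A.Sub C a := by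
    intro F
    induction F using Finset.induction_on with
    | empty =>
      intro _ G0 hG0
      obtain ⟨C, h1, h2, h3⟩ := hM G0 hG0
      exact ⟨C, fun c hc => .base c (h1 c hc), h2, h3, by simp⟩
    | insert z F _ ih =>
      intro hF G0 hG0
      obtain ⟨G, hG, H⟩ := A.cl_cover hH M z (hF z (by simp))
      obtain ⟨C, c1, c2, c3, c4⟩ := ih (fun a ha => hF a (by simp [ha])) (G0 ∪ G)
        (by simp [hG0, hG])
      obtain ⟨D, d1, d2, d3, d4⟩ := H C c1 c2 (fun a ha => c3 a (by simp [ha]))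
      refine ⟨D, d1, d2, fun a ha => d3 a (c3 a (by simp [ha])), ?_⟩
      intro a ha
      rcases Finset.mem_insert.1 ha with rfl | ha
      · exact d4
      · exact d3 a (c4 a ha)
  intro F hF
  obtain ⟨C, h1, h2, -, h3⟩ := main F (fun a ha => hF ha) ∅ (by simp)
  exact ⟨C, h1, h2, h3⟩

theorem add_mem {B : Set E} (hB : A.IsSubEA B) {a b c : E} (ha : a ∈ B) (hb : b ∈ B)
    (h : A.emb a + A.emb b = A.emb c) : c ∈ B := by
  have diff : ∀ x y z, x ∈ B → z ∈ B → A.emb x + A.emb y = A.emb z → y ∈ B := by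
    intro x y z hx hz h
    have hle : A.le x z := ⟨y, h⟩
    have h2 := hB.2 z hz x hx hle
    rwa [← A.emb_inj (A.ext_cancel h (A.ominus_spec hle))] at h2
  obtain ⟨c', hc⟩ := A.exists_compl c
  obtain ⟨a', ha'⟩ := A.exists_compl a
  have e : A.emb b + A.emb c' = A.emb a' := by
    refine A.ext_cancel (x := A.emb a) (d := A.one) ?_ ha'
    rw [← add_assoc, h, hc]
  have h1 := diff a a' A.one ha hB.1 ha'
  have h2 := diff b c' a' hb h1 e
  exact diff c' c A.one h2 hB.1 (by rw [add_comm]; exact hc)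

theorem zero_mem {B : Set E} (hB : A.IsSubEA B) : A.zero ∈ B := by
  have hle : A.le A.one A.one := ⟨A.zero, A.one_zero⟩
  have h2 := hB.2 _ hB.1 _ hB.1 hle
  rwa [← A.emb_inj (A.ext_cancel (A.one_zero : A.emb A.one + A.emb A.zero = A.emb A.one)
    (A.ominus_spec hle))] at h2

theorem sum_mem {B : Set E} (hB : A.IsSubEA B) (m : Multiset E) :
    ∀ s, (∀ c ∈ m, c ∈ B) → A.S m = A.emb s → s ∈ B := by
  induction m using Multiset.induction_on with
  | empty =>
    intro s _ h
    rw [S_zero, ← emb_zero] at h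
    rw [← A.emb_inj h]
    exact A.zero_mem hB
  | cons a m ih =>
    intro s h1 h2
    rw [S_cons] at h2
    obtain ⟨t, ht⟩ := A.right_fin h2
    rw [ht] at h2
    exact A.add_mem hB (h1 a (Multiset.mem_cons_self _ _))
      (ih t (fun c hc => h1 c (Multiset.mem_cons_of_mem hc)) ht) h2

/-- Maximality. -/
def MaxIC (B : Set E) : Prop := A.IC B ∧ A.one ∈ B ∧ ∀ N : Set E, A.IC N → B ⊆ N → B = N

theorem maxIC_closed (hH : A.Homogeneous) {B : Set E} (hB : A.MaxIC B) : A.Closed B := by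
  have h := hB.2.2 _ (A.cl_ic hH B hB.1) (fun a ha => Cl.base a ha)
  rw [h]
  exact A.closed_cl B

theorem maxIC_subEA (hH : A.Homogeneous) {B : Set E} (hB : A.MaxIC B) : A.IsSubEA B := by
  classical
  have hc := A.maxIC_closed hH hB
  refine ⟨hB.2.1, fun a ha b hb hle => ?_⟩
  have hd := A.ominus_spec hle
  set d := A.ominus a b
  have hN : A.IC (insert d B) := by
    intro F hF
    obtain ⟨C, c1, ⟨s, c2⟩, c3⟩ := hB.1 (insert a (insert b (F.erase d))) (by
      intro x hx
      simp only [Finset.coe_insert, Set.mem_insert_iff, Finset.mem_coe, Finset.mem_erase] at hx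
      rcases hx with rfl | rfl | ⟨h1, h2⟩
      · exact ha
      · exact hb
      · exact (hF h2).resolve_left h1)
    obtain ⟨X, hX, hXa⟩ := c3 a (by simp)
    obtain ⟨X', r, hX'B, hbX⟩ := A.key hH hc c1 c2 hX hXa (c3 b (by simp)) hle
    obtain ⟨K, -, hr, hKB⟩ := r.of_le hX c1 hX'B
    refine ⟨X' + K, fun c hc => Or.inr (hKB c hc), hr.fin ⟨s, c2⟩, ?_⟩
    intro x hx
    by_cases hxd : x = d
    · rw [hxd]
      exact (hbX.diff (r.sum.trans hXa) hd).mono (Multiset.le_add_right _ _)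
    · exact hr.sub (c3 x (by simp [hx, hxd]))
  rw [hB.2.2 _ hN (Set.subset_insert _ _)]
  exact Set.mem_insert _ _

theorem maxIC_rdp (hH : A.Homogeneous) {B : Set E} (hB : A.MaxIC B) : A.RDPOn B := by
  classical
  have hc := A.maxIC_closed hH hB
  have hsub := A.maxIC_subEA hH hB
  intro u v1 v2 s hu hv1 hv2 hs hus
  rw [← emb_add] at hs
  have hsB := A.add_mem hsub hv1 hv2 hs
  obtain ⟨C, c1, ⟨s0, c2⟩, c3⟩ := hB.1 {s, v1, u} (by
    intro x hx
    simp only [Finset.coe_insert, Set.mem_insert_iff, Finset.coe_singleton,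
      Set.mem_singleton_iff] at hx
    rcases hx with rfl | rfl | rfl <;> assumption)
  obtain ⟨X, hX, hXs⟩ := c3 s (by simp)
  obtain ⟨X', r, hX'B, V1, hV1, hV1s⟩ := A.key hH hc c1 c2 hX hXs (c3 v1 (by simp)) ⟨v2, hs⟩
  obtain ⟨K, -, hr, hKB⟩ := r.of_le hX c1 hX'B
  obtain ⟨V2, rfl⟩ := Multiset.le_iff_exists_add.1 hV1
  have hXs' := r.sum.trans hXs
  have hV2s : A.S V2 = A.emb v2 := by
    refine A.ext_cancel (x := A.emb v1) (d := s) ?_ hs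
    rw [← hV1s, ← S_add, hXs']
  obtain ⟨Y, rY, hYB, U, hU, hUs⟩ := A.key hH hc hKB (hr.sum.trans c2)
    (Multiset.le_add_right _ _) hXs' (hr.sub (c3 u (by simp))) hus
  obtain ⟨Y1, Y2, rfl, r1, r2⟩ := rY.le_split V1 V2 rfl
  have eU : U = U ∩ Y1 + (U - Y1) := by
    ext a; simp [Multiset.count_inter, Multiset.count_sub]; omega
  have l1 : U ∩ Y1 ≤ Y1 := Multiset.inter_le_right
  have l2 : U - Y1 ≤ Y2 := by
    rw [Multiset.le_iff_count] at hU ⊢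
    intro a
    have := hU a
    simp [Multiset.count_sub] at this ⊢; omega
  have hY1 := r1.sum.trans hV1s
  have hY2 := r2.sum.trans hV2s
  obtain ⟨u1, hu1⟩ := A.S_le l1 hY1
  obtain ⟨u2, hu2⟩ := A.S_le l2 hY2
  have lele : ∀ {P Q : Multiset E} {p q : E}, P ≤ Q → A.S P = A.emb p → A.S Q = A.emb q →
      A.le p q := by
    intro P Q p q h hp hq
    obtain ⟨k, rfl⟩ := Multiset.le_iff_exists_add.1 h
    rw [S_add, hp] at hq
    exact A.le_of_add hq
  refine ⟨u1, u2, ?_, ?_, lele l1 hu1 hY1, lele l2 hu2 hY2, ?_⟩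
  · exact A.sum_mem hsub _ _
      (fun c hc => hYB c (Multiset.mem_add.2 (Or.inl (Multiset.mem_of_le l1 hc)))) hu1
  · exact A.sum_mem hsub _ _
      (fun c hc => hYB c (Multiset.mem_add.2 (Or.inr (Multiset.mem_of_le l2 hc)))) hu2
  · rw [← emb_add, ← hu1, ← hu2, ← S_add, ← eU, hUs]

theorem split_rdp {B : Set E} (hB : A.IsSubEA B) (hR : A.RDPOn B) (R : Multiset E) :
    ∀ u s, (∀ r ∈ R, r ∈ B) → u ∈ B → A.S R = A.emb s → A.le u s →
      ∃ R', A.Ref R R' ∧ (∀ r ∈ R', r ∈ B) ∧ A.Sub R' u := by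
  induction R using Multiset.induction_on with
  | empty =>
    intro u s _ _ hs hu
    obtain ⟨c, hc⟩ := hu
    rw [← emb_add, ← hs, S_zero] at hc
    have := A.add_eq_zero_left hc
    subst this
    exact ⟨0, .zero, by simp, 0, le_rfl, by simp [emb_zero]⟩
  | cons v R ih =>
    intro u s hRB huB hs hu
    rw [S_cons] at hs
    obtain ⟨s2, hs2⟩ := A.right_fin hs
    rw [hs2] at hs
    have hRB' : ∀ r ∈ R, r ∈ B := fun r hr => hRB r (Multiset.mem_cons_of_mem hr)
    have hvB := hRB v (Multiset.mem_cons_self _ _)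
    obtain ⟨u1, u2, hu1, hu2, h1, h2, h12⟩ :=
      hR u v s2 s huB hvB (A.sum_mem hB R s2 hRB' hs2) hs hu
    rw [← emb_add] at h12
    obtain ⟨R', hr, hRB, T, hT, hTs⟩ := ih u2 s2 hRB' hu2 hs2 h2
    refine ⟨u1 ::ₘ A.ominus v u1 ::ₘ R', .split _ _ _ _ _ (A.ominus_spec h1) hr, ?_, u1 ::ₘ T,
      ?_, ?_⟩
    · intro r hr'
      simp only [Multiset.mem_cons] at hr'
      rcases hr' with rfl | rfl | h
      · exact hu1
      · exact hB.2 v hvB u1 hu1 h1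
      · exact hRB r h
    · exact Multiset.cons_le_cons _ (hT.trans (Multiset.le_cons_self _ _))
    · rw [S_cons, hTs, h12]

theorem rdp_ic {B : Set E} (hB : A.IsSubEA B) (hR : A.RDPOn B) : A.IC B := by
  classical
  have main : ∀ F : Finset E, ↑F ⊆ B → ∃ C : Multiset E, (∀ c ∈ C, c ∈ B) ∧
      A.S C = A.emb A.one ∧ ∀ a ∈ F, A.Sub C a := by
    intro F
    induction F using Finset.induction_on with
    | empty =>
      intro _
      exact ⟨{A.one}, by simpa using hB.1, by simp [S], by simp⟩
    | insert z F _ ih =>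
      intro hF
      obtain ⟨C, c1, c2, c3⟩ := ih (fun a ha => hF (by simp at ha ⊢; exact Or.inr ha))
      obtain ⟨D, r, d1, d2⟩ := A.split_rdp hB hR C z A.one c1 (hF (by simp)) c2
        (A.exists_compl z)
      refine ⟨D, d1, r.sum.trans c2, ?_⟩
      intro a ha
      rcases Finset.mem_insert.1 ha with rfl | ha
      · exact d2
      · exact r.sub (c3 a ha)
  intro F hF
  obtain ⟨C, h1, h2, h3⟩ := main F hF
  exact ⟨C, h1, ⟨_, h2⟩, h3⟩

theorem exists_max (N : Set E) (hN : A.IC N) (h1 : A.one ∈ N) : ∃ B, N ⊆ B ∧ A.MaxIC B := by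
  obtain ⟨B, hNB, hmax⟩ := zorn_subset_nonempty {M : Set E | A.IC M} (by
    intro c hc hchain hne
    refine ⟨⋃₀ c, ?_, fun s hs => Set.subset_sUnion_of_mem hs⟩
    intro F hF
    obtain ⟨M, hM, hFM⟩ := DirectedOn.exists_mem_subset_of_finset_subset_biUnion
      hne (hchain.directedOn) (f := id) (s := F) (by simpa [Set.sUnion_eq_biUnion] using hF)
    obtain ⟨C, c1, c2, c3⟩ := hc hM F hFM
    exact ⟨C, fun x hx => ⟨M, hM, c1 x hx⟩, c2, c3⟩) N hN
  exact ⟨B, hNB, hmax.1, hNB h1, fun N' hN' h => Set.Subset.antisymm h (hmax.2 hN' h)⟩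

theorem max_iff_block (hH : A.Homogeneous) (B : Set E) : A.MaxIC B ↔ A.IsBlock B := by
  constructor
  · intro h
    refine ⟨A.maxIC_subEA hH h, A.maxIC_rdp hH h, fun B' h1 h2 h3 => ?_⟩
    exact (h.2.2 B' (A.rdp_ic h1 h2) h3).symm
  · rintro ⟨h1, h2, h3⟩
    refine ⟨A.rdp_ic h1 h2, h1.1, fun N hN hBN => ?_⟩
    obtain ⟨N', hNN', hmax⟩ := A.exists_max N hN (hBN h1.1)
    have := h3 N' (A.maxIC_subEA hH hmax) (A.maxIC_rdp hH hmax) (hBN.trans hNN')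
    exact Set.Subset.antisymm hBN (this ▸ hNN')

end Basic

end EffectAlgebra

/-- `B` is a maximal internally compatible subset containing `1`
iff `B` is a block. -/
theorem maximal_internally_compatible_iff_block {E : Type*}
    (A : EffectAlgebra E) (hH : A.Homogeneous) (B : Set E) :
    (A.InternallyCompatible B ∧ A.one ∈ B ∧
      ∀ N : Set E, A.InternallyCompatible N → B ⊆ N → B = N) ↔
    A.IsBlock B := by
  simp only [EffectAlgebra.ic_iff]
  exact A.max_iff_block hH B
end

section
/- Let a be an element of a homogeneous effect algebra E. The following are equivalent: (a) a is sharp, i.e. the infimum a ∧ a' exists and equals 0; (b) a is central in every block of E which contains a; (c) a is central in some block of E. -/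
namespace EAProof

section Abstract

variable {M : Type*} [AddCommMonoid M]

structure Hyp (I : M) : Prop where
  canc : ∀ x y z r : M, x + y = x + z → x + y + r = I → y = z
  pos : ∀ x y : M, x + y = 0 → x = 0
  hom : ∀ u w v₁ v₂ z : M, u + w = v₁ + v₂ → v₁ + v₂ + u + z = I →
    ∃ u₁ u₂ r₁ r₂, u₁ + r₁ = v₁ ∧ u₂ + r₂ = v₂ ∧ u₁ + u₂ = u

/-- refinement of multisets -/
def Ref (C D : Multiset M) : Prop :=
  ∃ L : Multiset (Multiset M), Multiset.Rel (fun c s => s.sum = c) C L ∧ L.join = D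

theorem Ref.zero : Ref (0 : Multiset M) 0 := ⟨0, Multiset.Rel.zero, by simp⟩

theorem Ref.cons {s C D : Multiset M} {c : M} (hs : s.sum = c) (h : Ref C D) :
    Ref (c ::ₘ C) (s + D) := by
  obtain ⟨L, h1, h2⟩ := h
  exact ⟨s ::ₘ L, Multiset.Rel.cons hs h1, by simp [h2]⟩

theorem ref_cons {C D : Multiset M} {c : M} (h : Ref (c ::ₘ C) D) :
    ∃ s D', s.sum = c ∧ Ref C D' ∧ D = s + D' := by
  obtain ⟨L, h1, h2⟩ := h
  rw [Multiset.rel_cons_left] at h1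
  obtain ⟨s, L', hs, hL, rfl⟩ := h1
  exact ⟨s, L'.join, hs, ⟨L', hL, rfl⟩, by simp [← h2]⟩

theorem Ref.refl (C : Multiset M) : Ref C C := by
  induction C using Multiset.induction with
  | empty => exact Ref.zero
  | cons c C ih => simpa using Ref.cons (s := {c}) (by simp) ih

theorem Ref.add {C D C' D' : Multiset M} (h : Ref C D) (h' : Ref C' D') :
    Ref (C + C') (D + D') := by
  obtain ⟨L, h1, h2⟩ := h
  obtain ⟨L', h1', h2'⟩ := h'
  exact ⟨L + L', Multiset.Rel.add h1 h1', by simp [h2, h2']⟩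

theorem ref_add {C C' D : Multiset M} (h : Ref (C + C') D) :
    ∃ D₁ D₂, D = D₁ + D₂ ∧ Ref C D₁ ∧ Ref C' D₂ := by
  obtain ⟨L, h1, h2⟩ := h
  rw [Multiset.rel_add_left] at h1
  obtain ⟨L1, L2, a, b, rfl⟩ := h1
  exact ⟨L1.join, L2.join, by simp [← h2], ⟨L1, a, rfl⟩, ⟨L2, b, rfl⟩⟩

theorem ref_zero {D : Multiset M} (h : Ref 0 D) : D = 0 := by
  obtain ⟨L, h1, h2⟩ := h
  rw [Multiset.rel_zero_left] at h1
  subst h1; simpa using h2.symm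

theorem Ref.sum_eq {C : Multiset M} : ∀ {D : Multiset M}, Ref C D → D.sum = C.sum := by
  induction C using Multiset.induction with
  | empty => intro D h; rw [ref_zero h]
  | cons c C ih =>
    intro D h
    obtain ⟨s, D', hs, h', rfl⟩ := ref_cons h
    simp [hs, ih h']

theorem Ref.trans {C : Multiset M} :
    ∀ {D F : Multiset M}, Ref C D → Ref D F → Ref C F := by
  induction C using Multiset.induction with
  | empty => intro D F h h'; rw [ref_zero h] at h'; exact h'
  | cons c C ih =>
    intro D F h h'
    obtain ⟨s, D', hs, h1, rfl⟩ := ref_cons h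
    obtain ⟨F1, F2, rfl, a, b⟩ := ref_add h'
    exact Ref.cons (by rw [a.sum_eq, hs]) (ih h1 b)

/-- the four-part decomposition for multisets -/
theorem four {M : Type*} {S S₂ T T₂ : Multiset M} (h : S + S₂ = T + T₂) :
    ∃ m c d n, T = m + c ∧ T₂ = d + n ∧ S = m + d ∧ S₂ = c + n := by
  classical
  have h1 : S - S ∩ T = S - T := by ext x; simp; omega
  refine ⟨S ∩ T, T - S, S - T, S₂ - (T - S), ?_, ?_, ?_, ?_⟩ <;> ext x <;>
    have := congrArg (Multiset.count x) h <;> simp at * <;> omega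

def Step (I : M) (C D : Multiset M) : Prop :=
  ∃ x y z R, C = (x + y) ::ₘ R ∧ D = x ::ₘ y ::ₘ R ∧ x + y + x + z = I

abbrev Steps (I : M) : Multiset M → Multiset M → Prop := Relation.ReflTransGen (Step I)

theorem Step.ref {I : M} {C D : Multiset M} (h : Step I C D) : Ref C D := by
  obtain ⟨x, y, z, R, rfl, rfl, -⟩ := h
  simpa using Ref.cons (s := {x, y}) (by simp) (Ref.refl R)

theorem Step.add {I : M} {C D : Multiset M} (h : Step I C D) (F) : Step I (C + F) (D + F) := by
  obtain ⟨x, y, z, R, rfl, rfl, hz⟩ := h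
  exact ⟨x, y, z, R + F, by simp, by simp, hz⟩

theorem steps_ref {I : M} {C D : Multiset M} (h : Steps I C D) : Ref C D := by
  induction h with
  | refl => exact Ref.refl _
  | tail _ h ih => exact ih.trans h.ref

theorem steps_add {I : M} {C D : Multiset M} (h : Steps I C D) (F) :
    Steps I (C + F) (D + F) := by
  induction h with
  | refl => exact Relation.ReflTransGen.refl
  | tail _ h ih => exact ih.tail (h.add F)

variable {I : M}

theorem split (H : Hyp I) (S : Multiset M) : ∀ u w z, u + w = S.sum → S.sum + u + z = I →
    ∃ P Q : Multiset M, P.sum = u ∧ Q.sum = w ∧ Steps I S (P + Q) := by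
  induction S using Multiset.induction with
  | empty =>
    intro u w z h1 h2
    simp only [Multiset.sum_zero] at h1
    have hu := H.pos u w h1
    have hw := H.pos w u (by rw [add_comm]; exact h1)
    exact ⟨0, 0, by simp [hu], by simp [hw], Relation.ReflTransGen.refl⟩
  | cons s S ih =>
    intro u w z h1 h2
    simp only [Multiset.sum_cons] at h1 h2
    obtain ⟨u1, u2, r1, r2, e1, e2, e3⟩ := H.hom u w s S.sum z h1 h2
    obtain ⟨P, Q, hP, hQ, hs⟩ := ih u2 r2 (s + u1 + z) e2 (by
      rw [← h2, ← e3]; abel)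
    refine ⟨u1 ::ₘ P, r1 ::ₘ Q, by simp [hP, e3], ?_, ?_⟩
    · rw [Multiset.sum_cons, hQ]
      refine H.canc u _ _ (u + z) ?_ ?_
      · rw [h1, ← e3, ← e1, ← e2]; abel
      · rw [← h2, ← e1, ← e2, ← e3]; abel
    · have a := steps_add hs {s}
      have b : Step I (P + Q + {s}) ((u1 ::ₘ P) + (r1 ::ₘ Q)) :=
        ⟨u1, r1, S.sum + u2 + z, P + Q, by rw [e1, add_comm]; simp, by
          simp [Multiset.cons_swap], by rw [← h2, ← e3, ← e1]; abel⟩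
      rw [add_comm S] at a
      simpa using a.tail b

theorem step_push (H : Hyp I) {C C' D : Multiset M} (h : Step I C C') (h' : Ref C D) :
    ∃ D', Steps I D D' ∧ Ref C' D' := by
  obtain ⟨x, y, z, R, rfl, rfl, hz⟩ := h
  obtain ⟨s, D0, hs, h0, rfl⟩ := ref_cons h'
  obtain ⟨P, Q, hP, hQ, hst⟩ := split H s x y z hs.symm (by rw [hs, hz])
  exact ⟨P + Q + D0, steps_add hst D0, by
    rw [add_assoc]; exact Ref.cons hP (Ref.cons hQ h0)⟩

theorem steps_push (H : Hyp I) {C C' D : Multiset M} (h : Steps I C C') (h' : Ref C D) :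
    ∃ D', Steps I D D' ∧ Ref C' D' := by
  induction h with
  | refl => exact ⟨D, Relation.ReflTransGen.refl, h'⟩
  | tail _ h ih =>
    obtain ⟨D1, a, b⟩ := ih
    obtain ⟨D2, c, d⟩ := step_push H h b
    exact ⟨D2, a.trans c, d⟩

structure Dir (I : M) (𝒟 : Set (Multiset M)) : Prop where
  ne : 𝒟.Nonempty
  nz : ∀ C ∈ 𝒟, C ≠ 0
  sum : ∀ C ∈ 𝒟, C.sum = I
  dir : ∀ C₁ ∈ 𝒟, ∀ C₂ ∈ 𝒟, ∃ D ∈ 𝒟, Ref C₁ D ∧ Ref C₂ D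

theorem exists_max {𝒟₀ : Set (Multiset M)} (h : Dir I 𝒟₀) :
    ∃ 𝒟, 𝒟₀ ⊆ 𝒟 ∧ Dir I 𝒟 ∧ ∀ 𝒟', Dir I 𝒟' → 𝒟 ⊆ 𝒟' → 𝒟' = 𝒟 := by
  obtain ⟨𝒟, h1, h2⟩ := zorn_subset_nonempty {𝒟 | Dir I 𝒟} (by
    intro c hc hch hne
    refine ⟨⋃₀ c, ⟨?_, ?_, ?_, ?_⟩, fun s hs => Set.subset_sUnion_of_mem hs⟩
    · obtain ⟨s, hs⟩ := hne
      obtain ⟨x, hx⟩ := (hc hs).ne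
      exact ⟨x, s, hs, hx⟩
    · rintro C ⟨s, hs, hC⟩
      exact (hc hs).nz C hC
    · rintro C ⟨s, hs, hC⟩
      exact (hc hs).sum C hC
    · rintro C ⟨s, hs, hC⟩ C' ⟨s', hs', hC'⟩
      rcases hch.total hs hs' with hle | hle
      · obtain ⟨D, hD, hr⟩ := (hc hs').dir C (hle hC) C' hC'
        exact ⟨D, ⟨s', hs', hD⟩, hr⟩
      · obtain ⟨D, hD, hr⟩ := (hc hs).dir C hC C' (hle hC')
        exact ⟨D, ⟨s, hs, hD⟩, hr⟩) 𝒟₀ h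
  exact ⟨𝒟, h1, h2.prop, fun 𝒟' hd hle => (h2.eq_of_subset hd hle).symm⟩

theorem dir_closure (H : Hyp I) {𝒟 : Set (Multiset M)} (h : Dir I 𝒟) :
    Dir I {D | ∃ C ∈ 𝒟, Steps I C D} := by
  refine ⟨?_, ?_, ?_, ?_⟩
  · obtain ⟨x, hx⟩ := h.ne
    exact ⟨x, x, hx, Relation.ReflTransGen.refl⟩
  · rintro D ⟨C, hC, hs⟩
    cases hs with
    | refl => exact h.nz _ hC
    | tail _ hs =>
      obtain ⟨x, y, z, R, -, rfl, -⟩ := hs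
      simp
  · rintro D ⟨C, hC, hs⟩
    rw [(steps_ref hs).sum_eq, h.sum C hC]
  · rintro D1 ⟨C1, hC1, hs1⟩ D2 ⟨C2, hC2, hs2⟩
    obtain ⟨C, hC, r1, r2⟩ := h.dir C1 hC1 C2 hC2
    obtain ⟨F1, s1, q1⟩ := steps_push H hs1 r1
    obtain ⟨F2, s2, q2⟩ := steps_push H hs2 r2
    obtain ⟨F, s3, q3⟩ := steps_push H s2 (steps_ref s1)
    exact ⟨F, ⟨C, hC, s1.trans s3⟩, q1.trans (steps_ref s3), q2.trans q3⟩

def Sub (𝒟 : Set (Multiset M)) : Set M := {b | ∃ S R : Multiset M, S + R ∈ 𝒟 ∧ S.sum = b}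

structure Good (I : M) (𝒟 : Set (Multiset M)) : Prop extends Dir I 𝒟 where
  cl : ∀ C D, C ∈ 𝒟 → Steps I C D → D ∈ 𝒟

/-- the key lemma -/
theorem key (H : Hyp I) {𝒟 : Set (Multiset M)} (G : Good I 𝒟) {S S₂ T T₂ : Multiset M} {e : M}
    (hC : S + S₂ ∈ 𝒟) (hT : S + S₂ = T + T₂) (he : T.sum + e = S.sum) :
    ∃ T' Q, Ref S (T' + Q) ∧ T'.sum = T.sum ∧ Q.sum = e ∧ T' + Q + S₂ ∈ 𝒟 := by
  have hI := G.sum _ hC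
  obtain ⟨m, c, d, n, rfl, rfl, rfl, rfl⟩ := four hT
  simp only [Multiset.sum_add] at *
  obtain ⟨P, Q, hP, hQ, hs⟩ := split H d c.sum e (m.sum + n.sum) (by
    refine H.canc m.sum _ _ (c.sum + n.sum) ?_ ?_
    · rw [← he]; abel
    · rw [← add_assoc m.sum, he, hI]) (by rw [← hI]; abel)
  refine ⟨m + P, Q, ?_, by simp [hP], hQ, ?_⟩
  · rw [add_assoc]; exact (Ref.refl m).add (steps_ref hs)
  · have a := steps_add hs (m + (c + n))
    rw [show d + (m + (c + n)) = m + d + (c + n) by abel] at a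
    have := G.cl _ _ hC a
    rwa [show m + P + Q + (c + n) = P + Q + (m + (c + n)) by abel]

structure SubA (I : M) (B : Set M) : Prop where
  one : I ∈ B
  bdd : ∀ b ∈ B, ∃ r, b + r = I
  diff : ∀ a ∈ B, ∀ b ∈ B, ∀ c, b + c = a → c ∈ B
  rdp : ∀ u ∈ B, ∀ v₁ ∈ B, ∀ v₂ ∈ B, ∀ w r, v₁ + v₂ + r = I → u + w = v₁ + v₂ →
    ∃ u₁ u₂ r₁ r₂, u₁ ∈ B ∧ u₂ ∈ B ∧ u₁ + r₁ = v₁ ∧ u₂ + r₂ = v₂ ∧ u₁ + u₂ = u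

theorem sub_common {𝒟 : Set (Multiset M)} (G : Dir I 𝒟) {a : M} (ha : a ∈ Sub 𝒟)
    {C : Multiset M} (hC : C ∈ 𝒟) :
    ∃ S R, S + R ∈ 𝒟 ∧ S.sum = a ∧ Ref C (S + R) := by
  obtain ⟨S, R, h, rfl⟩ := ha
  obtain ⟨D, hD, h1, h2⟩ := G.dir _ h _ hC
  obtain ⟨D1, D2, rfl, a, b⟩ := ref_add h1
  exact ⟨D1, D2, hD, a.sum_eq, h2⟩

theorem sub_subA (H : Hyp I) {𝒟 : Set (Multiset M)} (G : Good I 𝒟) : SubA I (Sub 𝒟) := by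
  refine ⟨?_, ?_, ?_, ?_⟩
  · obtain ⟨C, hC⟩ := G.ne
    exact ⟨C, 0, by simpa, G.sum _ hC⟩
  · rintro b ⟨S, R, h, rfl⟩
    exact ⟨R.sum, by rw [← G.sum _ h]; simp⟩
  · rintro a ⟨S, R, h, rfl⟩ b hb c hbc
    obtain ⟨T, T2, hT, rfl, hr⟩ := sub_common G.toDir hb h
    obtain ⟨S', S2', e, r1, r2⟩ := ref_add hr
    rw [e] at hT
    obtain ⟨T', Q, -, -, hQ, hD⟩ := key H G hT e.symm (by rw [hbc, r1.sum_eq])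
    exact ⟨Q, T' + S2', by rwa [show Q + (T' + S2') = T' + Q + S2' by abel], hQ⟩
  · rintro u hu v1 ⟨S, R, h, rfl⟩ v2 hv2 w r hr hw
    obtain ⟨T, T2, hT, rfl, href⟩ := sub_common G.toDir hv2 h
    obtain ⟨S', R', e, r1, r2⟩ := ref_add href
    rw [← r1.sum_eq] at hr hw ⊢
    have e' : T + T2 = R' + S' := by rw [e, add_comm]
    rw [e'] at hT
    obtain ⟨T', Q, -, hT', -, hD⟩ := key H G (e := r) hT e'.symm (by
      have hI := G.sum _ hT
      rw [Multiset.sum_add] at hI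
      refine H.canc S'.sum _ _ 0 ?_ ?_
      · rw [← add_assoc, hr, ← hI, add_comm]
      · rw [← add_assoc, hr, add_zero])
    rw [← hT'] at hr hw ⊢
    obtain ⟨U, U2, hU, rfl, hrefU⟩ := sub_common G.toDir hu hD
    rw [show T' + Q + S' = (S' + T') + Q by abel] at hrefU
    obtain ⟨W, Q', eW, q1, q2⟩ := ref_add hrefU
    rw [eW] at hU
    obtain ⟨U', Q'', hW, hU', -, hF⟩ := key H G (e := w) hU eW.symm (by
      rw [hw, q1.sum_eq, Multiset.sum_add])
    obtain ⟨V1, V2, eV, p1, p2⟩ := ref_add (q1.trans hW)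
    obtain ⟨m, c, d, n, rfl, rfl, rfl, rfl⟩ := four eV
    rw [← p1.sum_eq, ← p2.sum_eq, ← hU']
    refine ⟨m.sum, d.sum, c.sum, n.sum, ⟨m, d + (c + n) + Q', ?_, rfl⟩,
      ⟨d, m + (c + n) + Q', ?_, rfl⟩, by simp, by simp, by simp⟩
    · convert hF using 1; abel
    · convert hF using 1; abel

theorem sub_closed (H : Hyp I) {𝒟 : Set (Multiset M)} (G : Good I 𝒟) {u w y z : M}
    (hy : y ∈ Sub 𝒟) (h1 : u + w = y) (h2 : y + u + z = I) : u ∈ Sub 𝒟 := by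
  obtain ⟨S, R, h, rfl⟩ := hy
  obtain ⟨P, Q, hP, hQ, hs⟩ := split H S u w z h1 h2
  exact ⟨P, Q + R, by rw [← add_assoc]; exact G.cl _ _ h (steps_add hs R), hP⟩

/-- partitions of `I` with pieces in `B` -/
def Parts (I : M) (B : Set M) : Set (Multiset M) := {C | C ≠ 0 ∧ C.sum = I ∧ ∀ c ∈ C, c ∈ B}

theorem SubA.zero_mem (_ : Hyp I) {B : Set M} (h : SubA I B) : (0 : M) ∈ B :=
  h.diff I h.one I h.one 0 (add_zero I)

theorem SubA.add_mem {B : Set M} (h : SubA I B) {a b r : M} (ha : a ∈ B) (hb : b ∈ B)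
    (hr : a + b + r = I) : a + b ∈ B := by
  have h1 : b + r ∈ B := h.diff I h.one a ha _ (by rw [← hr]; abel)
  have h2 : r ∈ B := h.diff _ h1 b hb _ rfl
  exact h.diff I h.one r h2 _ (by rw [← hr]; abel)

theorem SubA.sum_mem (H : Hyp I) {B : Set M} (h : SubA I B) (X : Multiset M) :
    ∀ r, (∀ x ∈ X, x ∈ B) → X.sum + r = I → X.sum ∈ B := by
  induction X using Multiset.induction with
  | empty => intro r _ _; simpa using h.zero_mem H
  | cons x X ih =>
    intro r hX hr
    simp only [Multiset.sum_cons] at *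
    exact h.add_mem (hX x (by simp)) (ih (x + r) (fun y hy => hX y (by simp [hy])) (by
      rw [← hr]; abel)) hr

theorem rdp_split (H : Hyp I) {B : Set M} (h : SubA I B) (S : Multiset M) :
    ∀ u w z, (∀ x ∈ S, x ∈ B) → u ∈ B → w ∈ B → u + w = S.sum → S.sum + z = I →
    ∃ P Q : Multiset M, P.sum = u ∧ Q.sum = w ∧ Ref S (P + Q) ∧
      (∀ x ∈ P, x ∈ B) ∧ (∀ x ∈ Q, x ∈ B) := by
  induction S using Multiset.induction with
  | empty =>
    intro u w z _ _ _ h1 h2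
    simp only [Multiset.sum_zero] at h1
    have hu := H.pos u w h1
    have hw := H.pos w u (by rw [add_comm]; exact h1)
    exact ⟨0, 0, by simp [hu], by simp [hw], by simpa using Ref.zero, by simp, by simp⟩
  | cons s S ih =>
    intro u w z hS hu hw h1 h2
    simp only [Multiset.sum_cons] at h1 h2
    have hSB : ∀ x ∈ S, x ∈ B := fun y hy => hS y (by simp [hy])
    have hs : s ∈ B := hS s (by simp)
    have hSs : S.sum ∈ B := h.sum_mem H S (s + z) hSB (by rw [← h2]; abel)
    obtain ⟨u1, u2, r1, r2, m1, m2, e1, e2, e3⟩ := h.rdp u hu s hs S.sum hSs w z h2 h1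
    obtain ⟨P, Q, hP, hQ, hr, hPB, hQB⟩ := ih u2 r2 (s + z) hSB m2
      (h.diff _ hSs _ m2 _ e2) e2 (by rw [← h2]; abel)
    refine ⟨u1 ::ₘ P, r1 ::ₘ Q, by simp [hP, e3], ?_, ?_, ?_, ?_⟩
    · rw [Multiset.sum_cons, hQ]
      refine H.canc u _ _ z ?_ ?_
      · rw [h1, ← e3, ← e1, ← e2]; abel
      · rw [← h2, ← e1, ← e2, ← e3]; abel
    · have := Ref.cons (s := {u1, r1}) (c := s) (by simp [e1]) hr
      convert this using 1
      simp [Multiset.cons_swap]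
    · intro x hx
      rcases Multiset.mem_cons.1 hx with rfl | hx
      · exact m1
      · exact hPB x hx
    · intro x hx
      rcases Multiset.mem_cons.1 hx with rfl | hx
      · exact h.diff _ hs _ m1 _ e1
      · exact hQB x hx

theorem rdp_common (H : Hyp I) {B : Set M} (h : SubA I B) (X : Multiset M) :
    ∀ (Y : Multiset M) z, (∀ x ∈ X, x ∈ B) → (∀ x ∈ Y, x ∈ B) → X.sum = Y.sum → X.sum + z = I →
    ∃ D, Ref (0 ::ₘ X) D ∧ Ref (0 ::ₘ Y) D ∧ (∀ x ∈ D, x ∈ B) ∧ D ≠ 0 := by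
  induction X using Multiset.induction with
  | empty =>
    intro Y z hX hY h1 h2
    refine ⟨0 ::ₘ Y, ?_, Ref.refl _, ?_, by simp⟩
    · have := Ref.cons (s := 0 ::ₘ Y) (c := 0) (by simpa using h1.symm) Ref.zero
      simpa using this
    · intro y hy
      rcases Multiset.mem_cons.1 hy with rfl | hy
      · exact h.zero_mem H
      · exact hY y hy
  | cons x X ih =>
    intro Y z hX hY h1 h2
    simp only [Multiset.sum_cons] at h1 h2
    have hXB : ∀ x ∈ X, x ∈ B := fun y hy => hX y (by simp [hy])
    have hx : x ∈ B := hX x (by simp)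
    have hXs : X.sum ∈ B := h.sum_mem H X (x + z) hXB (by rw [← h2]; abel)
    obtain ⟨P, Q, hP, hQ, hr, hPB, hQB⟩ := rdp_split H h Y x X.sum z hY hx hXs h1 (by rw [← h1, h2])
    obtain ⟨D, d1, d2, d3, d4⟩ := ih Q (x + z) hXB hQB hQ.symm (by rw [← h2]; abel)
    refine ⟨P + D, ?_, ?_, ?_, ?_⟩
    · rw [Multiset.cons_swap]; exact Ref.cons hP d1
    · have h0 : Ref (0 ::ₘ Y) (P + (0 ::ₘ Q)) := by
        have := Ref.cons (s := {0}) (c := 0) (by simp) hr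
        convert this using 1
        simp
      exact h0.trans ((Ref.refl P).add d2)
    · intro y hy
      rcases Multiset.mem_add.1 hy with hy | hy
      · exact hPB y hy
      · exact d3 y hy
    · intro h0
      exact d4 (by simpa using (add_eq_zero.1 h0).2)

theorem ref_cons_zero {X : Multiset M} (h : X ≠ 0) : Ref X (0 ::ₘ X) := by
  obtain ⟨x, hx⟩ := Multiset.exists_mem_of_ne_zero h
  obtain ⟨X', rfl⟩ := Multiset.exists_cons_of_mem hx
  have := Ref.cons (s := {0, x}) (c := x) (by simp) (Ref.refl X')
  convert this using 1
  simp [Multiset.cons_swap]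

theorem parts_dir (H : Hyp I) {B : Set M} (h : SubA I B) : Dir I (Parts I B) := by
  refine ⟨⟨{I}, by simp, by simp, by simpa using h.one⟩, fun C hC => hC.1, fun C hC => hC.2.1, ?_⟩
  rintro C1 ⟨n1, s1, m1⟩ C2 ⟨n2, s2, m2⟩
  obtain ⟨D, r1, r2, hB, hD⟩ := rdp_common H h C1 C2 0 m1 m2 (by rw [s1, s2]) (by rw [s1, add_zero])
  exact ⟨D, ⟨hD, by rw [r1.sum_eq]; simp [s1], hB⟩,
    (ref_cons_zero n1).trans r1, (ref_cons_zero n2).trans r2⟩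

theorem sub_parts {B : Set M} (h : SubA I B) : B ⊆ Sub (Parts I B) := by
  intro b hb
  obtain ⟨r, hr⟩ := h.bdd b hb
  refine ⟨{b}, {r}, ⟨by simp, by simp [hr], ?_⟩, by simp⟩
  have : r ∈ B := h.diff I h.one b hb r hr
  simp [hb, this]

theorem main (H : Hyp I) {𝒟₀ : Set (Multiset M)} (h : Dir I 𝒟₀) :
    ∃ B, Sub 𝒟₀ ⊆ B ∧ SubA I B ∧ (∀ B', SubA I B' → B ⊆ B' → B' = B) ∧
      ∀ u w y z, y ∈ B → u + w = y → y + u + z = I → u ∈ B := by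
  obtain ⟨𝒟, h1, h2, h3⟩ := exists_max h
  have G : Good I 𝒟 := ⟨h2, fun C D hC hs => by
    have := h3 _ (dir_closure H h2) (fun C hC => ⟨C, hC, Relation.ReflTransGen.refl⟩)
    rw [← this]
    exact ⟨C, hC, hs⟩⟩
  refine ⟨Sub 𝒟, ?_, sub_subA H G, ?_, fun u w y z hy a b => sub_closed H G hy a b⟩
  · rintro b ⟨S, R, hS, hb⟩
    exact ⟨S, R, h1 hS, hb⟩
  · intro B' hB' hle
    have e := h3 _ (parts_dir H hB') (fun C hC => ⟨h2.nz C hC, h2.sum C hC, fun c hc => by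
      obtain ⟨C', rfl⟩ := Multiset.exists_cons_of_mem hc
      exact hle ⟨{c}, C', by simpa using hC, by simp⟩⟩)
    exact (e ▸ sub_parts hB').antisymm hle

end Abstract

section Concrete

variable {E : Type*} (A : EffectAlgebra E)

theorem compl_spec (a : E) : A.oplus a (A.compl a) = some A.one :=
  Classical.epsilon_spec (p := fun b => A.oplus a b = some A.one) (A.compl_exists a)

theorem one_zero : A.oplus A.one A.zero = some A.one := by
  obtain ⟨b, hb⟩ := A.compl_exists A.one
  have := A.add_one b A.one (by rw [A.comm]; exact hb)
  rwa [this] at hb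

theorem add_zero' (a : E) : A.oplus a A.zero = some a := by
  have h1 := compl_spec A a
  obtain ⟨b, h2, h3⟩ := A.assoc (A.compl a) a A.zero A.one A.one (by rw [A.comm, h1]) (one_zero A)
  have := A.compl_unique (A.compl a) a b (by rw [A.comm, h1]) h3
  rw [h2, this]

theorem cancel {a b c d : E} (h1 : A.oplus a b = some d) (h2 : A.oplus a c = some d) : b = c := by
  have hd := compl_spec A d
  obtain ⟨e, h3, h4⟩ := A.assoc b a (A.compl d) d A.one (by rw [A.comm, h1]) hd
  obtain ⟨e', h5, h6⟩ := A.assoc c a (A.compl d) d A.one (by rw [A.comm, h2]) hd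
  have : e = e' := by rw [h3] at h5; exact Option.some.inj h5
  subst this
  exact A.compl_unique e b c (by rw [A.comm, h4]) (by rw [A.comm, h6])

theorem pos' {a b : E} (h : A.oplus a b = some A.zero) : a = A.zero := by
  obtain ⟨e, h3, h4⟩ := A.assoc b a A.one A.zero A.one (by rw [A.comm, h])
    (by rw [A.comm]; exact one_zero A)
  exact A.add_one a e h3

def Mon (_ : EffectAlgebra E) : Type _ := Option E

def mk (a : E) : Mon A := some a

def add : Option E → Option E → Option E
  | some a, some b => A.oplus a b
  | _, _ => none

theorem add_eq_some {x y : Option E} {c : E} (h : add A x y = some c) :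
    ∃ a b, x = some a ∧ y = some b ∧ A.oplus a b = some c := by
  cases x <;> cases y <;> simp [add] at h ⊢
  exact h

theorem add_comm' (x y : Option E) : add A x y = add A y x := by
  cases x <;> cases y <;> simp [add]
  exact A.comm _ _

theorem add_assoc_some {x y z : Option E} {d : E} (h : add A (add A x y) z = some d) :
    add A x (add A y z) = some d := by
  obtain ⟨a, b, h1, rfl, h2⟩ := add_eq_some A h
  obtain ⟨p, q, rfl, rfl, h3⟩ := add_eq_some A h1
  obtain ⟨r, h4, h5⟩ := A.assoc _ _ _ _ _ h3 h2
  simp [add, h4, h5]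

theorem add_assoc' (x y z : Option E) : add A (add A x y) z = add A x (add A y z) := by
  cases h : add A (add A x y) z with
  | some d => exact (add_assoc_some A h).symm
  | none =>
    cases h' : add A x (add A y z) with
    | none => rfl
    | some d =>
      rw [add_comm' A x, add_comm' A y] at h'
      have := add_assoc_some A h'
      rw [add_comm' A z, add_comm' A y] at this
      rw [h] at this
      exact this

instance : Add (Mon A) := ⟨add A⟩

instance : Zero (Mon A) := ⟨mk A A.zero⟩

instance : AddCommMonoid (Mon A) where
  add_assoc := add_assoc' A
  add_comm := add_comm' A
  zero_add x := by
    change add A (some A.zero) x = x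
    cases x with
    | none => rfl
    | some a => simp [add]; rw [A.comm]; exact add_zero' A a
  add_zero x := by
    change add A x (some A.zero) = x
    cases x with
    | none => rfl
    | some a => exact add_zero' A a
  nsmul := nsmulRec

theorem mk_inj {a b : E} (h : mk A a = mk A b) : a = b := Option.some.inj h

theorem mk_add {a b c : E} : mk A a + mk A b = mk A c ↔ A.oplus a b = some c := Iff.rfl

theorem mk_zero : mk A A.zero = 0 := rfl

theorem add_eq_mk {x y : Mon A} {c : E} (h : x + y = mk A c) :
    ∃ a b, x = mk A a ∧ y = mk A b ∧ A.oplus a b = some c := add_eq_some A h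

theorem le_iff {a b : E} : A.le a b ↔ ∃ x : Mon A, mk A a + x = mk A b := by
  constructor
  · rintro ⟨c, hc⟩; exact ⟨mk A c, hc⟩
  · rintro ⟨x, hx⟩
    obtain ⟨p, q, h1, rfl, h2⟩ := add_eq_mk A hx
    exact ⟨q, hx⟩

theorem mk_compl (a : E) : mk A a + mk A (A.compl a) = mk A A.one := compl_spec A a

theorem le_compl_iff {u s : E} :
    A.le u (A.compl s) ↔ ∃ z : Mon A, mk A s + mk A u + z = mk A A.one := by
  rw [le_iff]
  constructor
  · rintro ⟨x, hx⟩
    exact ⟨x, by rw [add_assoc, hx, mk_compl]⟩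
  · rintro ⟨x, hx⟩
    refine ⟨x, ?_⟩
    rw [add_assoc] at hx
    obtain ⟨p, q, h1, h2, h3⟩ := add_eq_mk A hx
    rw [h2]
    have := A.compl_unique s (A.compl s) q (compl_spec A s) (mk_inj A h1 ▸ h3)
    rw [this]

theorem hyp (hH : A.Homogeneous) : Hyp (mk A A.one) := by
  refine ⟨?_, ?_, ?_⟩
  · intro x y z r h1 h2
    obtain ⟨d, r', h3, -, -⟩ := add_eq_mk A h2
    obtain ⟨a, b, rfl, rfl, h4⟩ := add_eq_mk A h3
    rw [h1] at h3
    obtain ⟨a', c, h5, rfl, h6⟩ := add_eq_mk A h3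
    rw [mk_inj A h5] at h4
    rw [cancel A h4 h6]
  · intro x y h
    rw [← mk_zero] at h
    obtain ⟨a, b, rfl, rfl, h4⟩ := add_eq_mk A h
    rw [pos' A h4, mk_zero]
  · intro u w v1 v2 z h1 h2
    obtain ⟨p, z', h3, -, -⟩ := add_eq_mk A h2
    obtain ⟨s, u', h4, rfl, -⟩ := add_eq_mk A h3
    obtain ⟨v1, v2, rfl, rfl, h5⟩ := add_eq_mk A h4
    rw [h4] at h1 h2
    obtain ⟨u1, u2, l1, l2, hu⟩ := hH u' v1 v2 s h5 ((le_iff A).2 ⟨w, h1⟩)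
      ((le_compl_iff A).2 ⟨z, h2⟩)
    obtain ⟨r1, l1⟩ := (le_iff A).1 l1
    obtain ⟨r2, l2⟩ := (le_iff A).1 l2
    exact ⟨mk A u1, mk A u2, r1, r2, l1, l2, hu⟩

theorem ominus_eq {a b c : E} (h : A.oplus b c = some a) : A.ominus a b = c :=
  cancel A (Classical.epsilon_spec (p := fun c => A.oplus b c = some a) ⟨c, h⟩) h

theorem toSubA {B : Set E} (h1 : A.IsSubEA B) (h2 : A.RDPOn B) :
    SubA (mk A A.one) (mk A '' B) := by
  refine ⟨⟨_, h1.1, rfl⟩, ?_, ?_, ?_⟩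
  · rintro _ ⟨b, hb, rfl⟩
    exact ⟨_, mk_compl A b⟩
  · rintro _ ⟨a, ha, rfl⟩ _ ⟨b, hb, rfl⟩ c h
    obtain ⟨p, q, e, rfl, h3⟩ := add_eq_mk A h
    have := h1.2 a ha b hb ⟨q, h⟩
    rw [ominus_eq A h] at this
    exact ⟨q, this, rfl⟩
  · rintro _ ⟨u, hu, rfl⟩ _ ⟨v1, hv1, rfl⟩ _ ⟨v2, hv2, rfl⟩ w r h3 h4
    obtain ⟨s, r', h5, -, -⟩ := add_eq_mk A h3
    rw [h5] at h4
    obtain ⟨u1, u2, m1, m2, l1, l2, e⟩ := h2 u v1 v2 s hu hv1 hv2 h5 ((le_iff A).2 ⟨w, h4⟩)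
    obtain ⟨r1, l1⟩ := (le_iff A).1 l1
    obtain ⟨r2, l2⟩ := (le_iff A).1 l2
    exact ⟨mk A u1, mk A u2, r1, r2, ⟨_, m1, rfl⟩, ⟨_, m2, rfl⟩, l1, l2, e⟩

theorem ofSubA {B : Set (Mon A)} (h : SubA (mk A A.one) B) :
    A.IsSubEA {a | mk A a ∈ B} ∧ A.RDPOn {a | mk A a ∈ B} := by
  refine ⟨⟨h.one, ?_⟩, ?_⟩
  · rintro a ha b hb ⟨c, hc⟩
    rw [ominus_eq A hc]
    exact h.diff _ ha _ hb _ hc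
  · intro u v1 v2 s hu hv1 hv2 h1 h2
    obtain ⟨w, hw⟩ := (le_iff A).1 h2
    have e : mk A v1 + mk A v2 = mk A s := h1
    obtain ⟨u1, u2, r1, r2, m1, m2, e1, e2, e3⟩ := h.rdp _ hu _ hv1 _ hv2 w
      (mk A (A.compl s)) (by rw [e, mk_compl]) (by rw [e, hw])
    obtain ⟨u1, u2, rfl, rfl, h3⟩ := add_eq_mk A e3
    exact ⟨u1, u2, m1, m2, (le_iff A).2 ⟨_, e1⟩, (le_iff A).2 ⟨_, e2⟩, h3⟩

theorem main' (hH : A.Homogeneous) {𝒟₀ : Set (Multiset (Mon A))} (h : Dir (mk A A.one) 𝒟₀) :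
    ∃ B : Set E, (∀ b, mk A b ∈ Sub 𝒟₀ → b ∈ B) ∧ A.IsBlock B ∧
      ∀ u y, y ∈ B → A.le u y → A.le u (A.compl y) → u ∈ B := by
  obtain ⟨B, h1, h2, h3, h4⟩ := main (hyp A hH) h
  refine ⟨{a | mk A a ∈ B}, fun b hb => h1 hb, ⟨(ofSubA A h2).1, (ofSubA A h2).2, ?_⟩, ?_⟩
  · intro B' s1 s2 hle
    have := h3 _ (toSubA A s1 s2) (by
      intro x hx
      obtain ⟨r, hr⟩ := h2.bdd x hx
      obtain ⟨a, b, rfl, -, -⟩ := add_eq_mk A hr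
      exact ⟨a, hle hx, rfl⟩)
    ext x
    rw [← this]
    constructor
    · intro hx; exact ⟨x, hx, rfl⟩
    · rintro ⟨y, hy, e⟩; rwa [← mk_inj A e]
  · intro u y hy l1 l2
    obtain ⟨w, hw⟩ := (le_iff A).1 l1
    obtain ⟨z, hz⟩ := (le_compl_iff A).1 l2
    exact h4 _ _ _ _ hy hw hz

theorem block_closed (hH : A.Homogeneous) {B : Set E} (hB : A.IsBlock B) {u y : E} (hy : y ∈ B)
    (h1 : A.le u y) (h2 : A.le u (A.compl y)) : u ∈ B := by
  have hS := toSubA A hB.1 hB.2.1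
  obtain ⟨B', a, b, c⟩ := main' A hH (parts_dir (hyp A hH) hS)
  have := hB.2.2 B' b.1 b.2.1 (fun x hx => a x (sub_parts hS ⟨x, hx, rfl⟩))
  subst this
  exact c u y hy h1 h2

theorem exists_block (hH : A.Homogeneous) (a : E) : ∃ B, A.IsBlock B ∧ a ∈ B := by
  have hd : Dir (mk A A.one) {({mk A a} + {mk A (A.compl a)} : Multiset (Mon A))} := by
    refine ⟨⟨_, rfl⟩, ?_, ?_, ?_⟩
    · rintro C rfl; simp
    · rintro C rfl; simp [mk_compl]
    · rintro C rfl D rfl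
      exact ⟨_, rfl, Ref.refl _, Ref.refl _⟩
  obtain ⟨B, h, hb, -⟩ := main' A hH hd
  exact ⟨B, hb, h a ⟨{mk A a}, {mk A (A.compl a)}, rfl, by simp⟩⟩

theorem le_trans' {a b c : E} (h1 : A.le a b) (h2 : A.le b c) : A.le a c := by
  rw [le_iff] at *
  obtain ⟨x, hx⟩ := h1
  obtain ⟨y, hy⟩ := h2
  exact ⟨x + y, by rw [← add_assoc, hx, hy]⟩

theorem le_antisymm' {a b : E} (h1 : A.le a b) (h2 : A.le b a) : a = b := by
  obtain ⟨c, hc⟩ := h1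
  obtain ⟨d, hd⟩ := h2
  obtain ⟨e, h3, h4⟩ := A.assoc _ _ _ _ _ hc hd
  have := cancel A h4 (add_zero' A a)
  subst this
  rw [pos' A h3, add_zero'] at hc
  exact Option.some.inj hc

theorem le_left {a b c : E} (h : A.oplus a b = some c) : A.le a c := ⟨b, h⟩

theorem le_right {a b c : E} (h : A.oplus a b = some c) : A.le b c := ⟨a, by rw [A.comm, h]⟩

theorem central_sharp (hH : A.Homogeneous) {B : Set E} (hB : A.IsBlock B) {a : E}
    (h : A.CentralIn B a) : A.Sharp a := by
  intro w h1 h2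
  have hw := block_closed A hH hB h.1.1 h1 h2
  obtain ⟨z, hz⟩ := (le_compl_iff A).1 h2
  obtain ⟨s, z', h3, -, -⟩ := add_eq_mk A hz
  have h4 : A.oplus a w = some s := h3
  have h5 := h.1.2 a h.1.1 w hw s ⟨A.zero, add_zero' A a⟩ h1 h4
  have h6 := le_antisymm' A h5 (le_left A h4)
  rw [h6] at h4
  exact cancel A h4 (add_zero' A a)

theorem sharp_central {B : Set E} (hB : A.IsBlock B) {a : E} (ha : a ∈ B)
    (h : A.Sharp a) : A.CentralIn B a := by
  obtain ⟨h1, h2, -⟩ := hB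
  have hS := toSubA A h1 h2
  have hone : ∀ b, A.le b A.one := fun b => ⟨_, compl_spec A b⟩
  have hac : A.compl a ∈ B := by
    have := h1.2 _ h1.1 a ha (hone a)
    rwa [ominus_eq A (compl_spec A a)] at this
  have hadd : ∀ x ∈ B, ∀ y ∈ B, ∀ s, A.oplus x y = some s → s ∈ B := by
    intro x hx y hy s hs
    have e : mk A x + mk A y = mk A s := hs
    have := hS.add_mem (r := mk A (A.compl s)) ⟨x, hx, rfl⟩ ⟨y, hy, rfl⟩ (by rw [e, mk_compl])
    rw [e] at this
    obtain ⟨s', hs', e'⟩ := this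
    rwa [← mk_inj A e']
  have zl : ∀ {t1 t2 s : E}, t1 = A.zero → A.oplus t1 t2 = some s → s = t2 := by
    rintro t1 t2 s rfl h
    rw [A.comm, add_zero'] at h
    exact (Option.some.inj h).symm
  have zr : ∀ {t1 t2 s : E}, t2 = A.zero → A.oplus t1 t2 = some s → s = t1 := by
    rintro t1 t2 s rfl h
    rw [add_zero'] at h
    exact (Option.some.inj h).symm
  refine ⟨⟨ha, ?_⟩, ?_⟩
  · intro x hx y hy s lx ly hs
    obtain ⟨s1, s2, m1, m2, l1, l2, e⟩ := h2 s a (A.compl a) A.one (hadd x hx y hy s hs) ha hac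
      (compl_spec A a) (hone s)
    obtain ⟨t1, t2, n1, n2, k1, k2, e'⟩ := h2 s2 x y s m2 hx hy hs (le_right A e)
    have z1 : t1 = A.zero := h t1 (le_trans' A k1 lx) (le_trans' A (le_left A e') l2)
    have z2 : t2 = A.zero := h t2 (le_trans' A k2 ly) (le_trans' A (le_right A e') l2)
    have : s2 = A.zero := by rw [zl z1 e', z2]
    rw [zr this e]
    exact l1
  · intro b hb
    obtain ⟨s1, s2, m1, m2, l1, l2, e⟩ := h2 b a (A.compl a) A.one hb ha hac
      (compl_spec A a) (hone b)
    have half : ∀ p1 p2 q1 q2, p1 ∈ B → q1 ∈ B → q2 ∈ B → A.le p1 a →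
        A.le q2 (A.compl a) → A.oplus p1 p2 = some b → A.oplus q1 q2 = some b → A.le p1 q1 := by
      intro p1 p2 q1 q2 hp hq1 hq2 lp lq e1 e2
      obtain ⟨t1, t2, n1, n2, k1, k2, e'⟩ := h2 p1 q1 q2 b hp hq1 hq2 e2 (le_left A e1)
      have z2 : t2 = A.zero := h t2 (le_trans' A (le_right A e') lp) (le_trans' A k2 lq)
      rw [zr z2 e']
      exact k1
    refine ⟨(s1, s2), ⟨m1, m2, l1, l2, e⟩, ?_⟩
    rintro ⟨q1, q2⟩ ⟨n1, n2, k1, k2, e'⟩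
    have hq : q1 = s1 := le_antisymm' A (half q1 q2 s1 s2 n1 m1 m2 k1 l2 e' e)
      (half s1 s2 q1 q2 m1 n1 n2 l1 k2 e e')
    dsimp only at hq e'
    subst hq
    rw [cancel A e' e]

end Concrete

end EAProof

/-- For an element `a` of a homogeneous effect algebra, the
following are equivalent: (a) `a` is sharp; (b) `a` is central in every block
containing `a`; (c) `a` is central in some block. -/
theorem sharp_iff_central_in_blocks {E : Type*} (A : EffectAlgebra E)
    (hH : A.Homogeneous) (a : E) :
    (A.Sharp a ↔ ∀ B : Set E, A.IsBlock B → a ∈ B → A.CentralIn B a) ∧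
    (A.Sharp a ↔ ∃ B : Set E, A.IsBlock B ∧ A.CentralIn B a) := by
  
  have key : A.Sharp a → ∀ B : Set E, A.IsBlock B → a ∈ B → A.CentralIn B a :=
    fun h B hB ha => EAProof.sharp_central A hB ha h
  obtain ⟨B, hB, ha⟩ := EAProof.exists_block A hH a
  exact ⟨⟨key, fun h => EAProof.central_sharp A hH hB (h B hB ha)⟩,
    ⟨fun h => ⟨B, hB, key h B hB ha⟩, fun ⟨B', hB', hc⟩ => EAProof.central_sharp A hH hB' hc⟩⟩
end

section
/- For a homogeneous effect algebra E, the set E_S of all sharp elements of E is a sub-effect algebra of E; moreover, E_S (with the restricted operation) is an orthoalgebra, i.e. a ⊥ a implies a = 0 in E_S. -/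
namespace EffectAlgebra

theorem aux_compl {E : Type*} (A : EffectAlgebra E) (a : E) :
    A.oplus a (A.compl a) = some A.one :=
  @Classical.epsilon_spec E (fun b => A.oplus a b = some A.one) (A.compl_exists a)

theorem aux_compl_eq {E : Type*} (A : EffectAlgebra E) {a b : E}
    (h : A.oplus a b = some A.one) : A.compl a = b :=
  A.compl_unique a _ _ (A.aux_compl a) h

theorem aux_one_zero {E : Type*} (A : EffectAlgebra E) :
    A.oplus A.one A.zero = some A.one := by
  have h := A.aux_compl A.one
  have h2 := h
  rw [A.comm] at h2
  rwa [A.add_one _ _ h2] at h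

theorem aux_add_zero {E : Type*} (A : EffectAlgebra E) (a : E) :
    A.oplus a A.zero = some a := by
  have h := A.aux_compl a
  have h' := h
  rw [A.comm] at h'
  obtain ⟨d, hd, hd'⟩ := A.assoc _ _ _ _ _ h' A.aux_one_zero
  rw [hd, A.compl_unique _ _ _ hd' h']

theorem aux_le_trans {E : Type*} (A : EffectAlgebra E) {a b c : E}
    (h : A.le a b) (h' : A.le b c) : A.le a c := by
  obtain ⟨x, hx⟩ := h
  obtain ⟨y, hy⟩ := h'
  obtain ⟨z, _, hz⟩ := A.assoc _ _ _ _ _ hx hy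
  exact ⟨z, hz⟩

theorem aux_le_zero {E : Type*} (A : EffectAlgebra E) {b : E}
    (h : A.le b A.zero) : b = A.zero := by
  obtain ⟨c, hc⟩ := h
  have h1 := A.aux_one_zero
  rw [A.comm] at h1
  obtain ⟨d, hd, _⟩ := A.assoc _ _ _ _ _ hc h1
  rw [A.add_one _ _ hd, A.aux_add_zero] at hc
  exact Option.some.inj hc

theorem aux_compl_le {E : Type*} (A : EffectAlgebra E) {v w s : E}
    (h : A.oplus v w = some s) : A.le (A.compl s) (A.compl v) := by
  obtain ⟨d, hd, hd'⟩ := A.assoc _ _ _ _ _ h (A.aux_compl s)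
  rw [A.aux_compl_eq hd']
  exact ⟨w, by rw [A.comm]; exact hd⟩

theorem aux_sharp_add {E : Type*} (A : EffectAlgebra E) (hH : A.Homogeneous) {v w s : E}
    (hv : A.Sharp v) (hw : A.Sharp w) (h : A.oplus v w = some s) : A.Sharp s := by
  intro u hu hu'
  obtain ⟨u₁, u₂, h₁, h₂, hs⟩ := hH u v w s h hu hu'
  have e₁ : u₁ = A.zero :=
    hv _ h₁ (A.aux_le_trans ⟨_, hs⟩ (A.aux_le_trans hu' (A.aux_compl_le h)))
  rw [A.comm] at h hs
  have e₂ : u₂ = A.zero :=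
    hw _ h₂ (A.aux_le_trans ⟨_, hs⟩ (A.aux_le_trans hu' (A.aux_compl_le h)))
  rw [e₁, e₂, A.aux_add_zero] at hs
  exact (Option.some.inj hs).symm

theorem aux_sharp_of {E : Type*} (A : EffectAlgebra E) {c x : E}
    (h : A.oplus c x = some A.one) (hx : A.Sharp x) : A.Sharp c := by
  intro b hb hb'
  rw [A.aux_compl_eq h] at hb'
  rw [A.comm] at h
  exact hx b hb' (by rw [A.aux_compl_eq h]; exact hb)

end EffectAlgebra

/-- In a homogeneous effect algebra, the sharp elements form a
sub-effect algebra which is an orthoalgebra. -/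
theorem sharp_elements_subalgebra_orthoalgebra {E : Type*}
    (A : EffectAlgebra E) (hH : A.Homogeneous) :
    A.IsSubEA {a | A.Sharp a} ∧
      ∀ a : E, A.Sharp a → A.Perp a a → a = A.zero := by
  refine ⟨⟨?_, ?_⟩, ?_⟩
  · intro b _ hb'
    rw [A.aux_compl_eq A.aux_one_zero] at hb'
    exact A.aux_le_zero hb'
  · intro a ha b hb hle
    have hc : A.oplus b (A.ominus a b) = some a :=
      @Classical.epsilon_spec E (fun c => A.oplus b c = some a) hle
    rw [A.comm] at hc
    obtain ⟨x, hx, hx'⟩ := A.assoc _ _ _ _ _ hc (A.aux_compl a)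
    have ha' : A.Sharp (A.compl a) :=
      A.aux_sharp_of (by rw [A.comm]; exact A.aux_compl a) ha
    exact A.aux_sharp_of hx' (A.aux_sharp_add hH hb ha' hx)
  · intro a ha hp
    obtain ⟨d, hd⟩ := Option.isSome_iff_exists.mp hp
    obtain ⟨x, hx, hx'⟩ := A.assoc _ _ _ _ _ hd (A.aux_compl d)
    exact ha a ⟨_, A.aux_add_zero a⟩ (by rw [A.aux_compl_eq hx']; exact ⟨_, hx⟩)
end
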